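/- arXiv:2101.05248 — 11 statements merged into one kernel-verified Lean document; each statement's English description precedes it below -/
import Mathlib

section
/- Let L : ℝ^n × ℝ^m → ℝ be C¹ and convex-concave with saddle point (p,q). For each i ∈ {1,…,n} let w_i : ℝ → ℝ be continuous and strictly positive on an open interval I_i containing p_i, and for each j ∈ {1,…,m} let v_j : ℝ → ℝ be continuous and strictly positive on an open interval J_j containing q_j. Consider the weighted gradient descent ascent dynamics ẋ_i(t) = −w_i(x_i(t))·(∂L/∂x_i)(x(t),y(t)), ẏ_j(t) = v_j(y_j(t))·(∂L/∂y_j)(x(t),y(t)) on the open box D = I_1×⋯×I_n × J_1×⋯×J_m. Then (p,q) is a stable equilibrium of this system: for every ε > 0 there exists δ > 0 such that every C¹ solution (x,y) defined for t ≥ 0 taking values in D with ‖(x(0),y(0)) − (p,q)‖ < δ satisfies ‖(x(t),y(t)) − (p,q)‖ < ε for all t ≥ 0. -/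
lemma wg_phi (a b p : ℝ) (w : ℝ → ℝ) (hp : p ∈ Set.Ioo a b)
    (hw : ContinuousOn w (Set.Ioo a b)) (hpos : ∀ z ∈ Set.Ioo a b, 0 < w z) :
    ∃ Φ : ℝ → ℝ, (∀ z ∈ Set.Ioo a b, HasDerivAt Φ ((z - p) / w z) z) ∧ Φ p = 0 ∧
      (∀ z ∈ Set.Ioo a b, 0 ≤ Φ z) ∧
      ∀ ε > 0, ∃ η > 0, ∀ z ∈ Set.Ioo a b, ε ≤ |z - p| → η ≤ Φ z := by
  have hc : ContinuousOn (fun z => (z - p) / w z) (Set.Ioo a b) :=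
    (by fun_prop : ContinuousOn (fun z : ℝ => z - p) (Set.Ioo a b)).div hw
      (fun z hz => (hpos z hz).ne')
  let Φ : ℝ → ℝ := fun z => ∫ s in p..z, (s - p) / w s
  have hd : ∀ z ∈ Set.Ioo a b, HasDerivAt Φ ((z - p) / w z) z := by
    intro z hz
    apply intervalIntegral.integral_hasDerivAt_right
    · apply ContinuousOn.intervalIntegrable
      exact hc.mono (Set.OrdConnected.uIcc_subset Set.ordConnected_Ioo hp hz)
    · exact hc.stronglyMeasurableAtFilter isOpen_Ioo z hz
    · exact hc.continuousAt (isOpen_Ioo.mem_nhds hz)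
  have h0 : Φ p = 0 := by simp [Φ]
  have hr : StrictMonoOn Φ (Set.Ico p b) := by
    apply strictMonoOn_of_deriv_pos (convex_Ico p b)
    · intro z hz
      exact (hd z ⟨hp.1.trans_le hz.1, hz.2⟩).continuousAt.continuousWithinAt
    · intro z hz
      rw [interior_Ico] at hz
      have hz' : z ∈ Set.Ioo a b := ⟨hp.1.trans hz.1, hz.2⟩
      rw [(hd z hz').deriv]
      exact div_pos (sub_pos.2 hz.1) (hpos z hz')
  have hl : StrictAntiOn Φ (Set.Ioc a p) := by
    apply strictAntiOn_of_deriv_neg (convex_Ioc a p)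
    · intro z hz
      exact (hd z ⟨hz.1, hz.2.trans_lt hp.2⟩).continuousAt.continuousWithinAt
    · intro z hz
      rw [interior_Ioc] at hz
      have hz' : z ∈ Set.Ioo a b := ⟨hz.1, hz.2.trans hp.2⟩
      rw [(hd z hz').deriv]
      exact div_neg_of_neg_of_pos (sub_neg.2 hz.2) (hpos z hz')
  refine ⟨Φ, hd, h0, ?_, ?_⟩
  · intro z hz
    rw [← h0]
    rcases le_total p z with h | h
    · exact hr.monotoneOn ⟨le_rfl, hp.2⟩ ⟨h, hz.2⟩ h
    · exact hl.antitoneOn ⟨hz.1, h⟩ ⟨hp.1, le_rfl⟩ h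
  · intro ε hε
    obtain ⟨e, he, he1⟩ : ∃ e > 0, e < min ε (min (p - a) (b - p)) :=
      exists_between (lt_min hε (lt_min (sub_pos.2 hp.1) (sub_pos.2 hp.2)))
    rw [lt_min_iff, lt_min_iff] at he1
    obtain ⟨e1, e2, e3⟩ := he1
    have m1 : p + e ∈ Set.Ico p b := ⟨by linarith, by linarith⟩
    have m2 : p - e ∈ Set.Ioc a p := ⟨by linarith, by linarith⟩
    refine ⟨min (Φ (p + e)) (Φ (p - e)), lt_min ?_ ?_, ?_⟩
    · rw [← h0]
      exact hr ⟨le_rfl, hp.2⟩ m1 (by linarith)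
    · rw [← h0]
      exact hl m2 ⟨hp.1, le_rfl⟩ (by linarith)
    · intro z hz h
      rcases le_abs.1 h with h | h
      · exact (min_le_left _ _).trans
          (hr.monotoneOn m1 ⟨by linarith, hz.2⟩ (by linarith))
      · exact (min_le_right _ _).trans
          (hl.antitoneOn ⟨hz.1, by linarith⟩ m2 (by linarith))

lemma wg_dist (n : ℕ) (ε : ℝ) (hε : 0 < ε) : ∃ e > 0, ∀ x p : EuclideanSpace ℝ (Fin n),
    (∀ i, |x i - p i| < e) → dist x p < ε := by
  refine ⟨ε / (n + 1), by positivity, fun x p h => ?_⟩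
  rw [EuclideanSpace.dist_eq, Real.sqrt_lt' hε]
  have h1 : ∑ i, dist (x i) (p i) ^ 2 ≤ ∑ i : Fin n, (ε / (n + 1)) ^ 2 := by
    apply Finset.sum_le_sum
    intro i _
    rw [Real.dist_eq]
    exact pow_le_pow_left₀ (abs_nonneg _) (h i).le 2
  refine h1.trans_lt ?_
  rw [Finset.sum_const, Finset.card_univ, Fintype.card_fin, nsmul_eq_mul, div_pow,
    mul_div_assoc', div_lt_iff₀ (by positivity), mul_comm]
  apply mul_lt_mul_of_pos_left _ (by positivity)
  have : (0 : ℝ) ≤ n := Nat.cast_nonneg n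
  nlinarith

lemma wg_min {ι : Type*} [Finite ι] (f : ι → ℝ) (hf : ∀ i, 0 < f i) :
    ∃ e > 0, ∀ i, e ≤ f i := by
  have h : ∀ᶠ e in nhdsWithin (0 : ℝ) (Set.Ioi 0), ∀ i, e ≤ f i := by
    rw [Filter.eventually_all]
    intro i
    exact Filter.Eventually.filter_mono nhdsWithin_le_nhds (eventually_le_nhds (hf i))
  obtain ⟨e, h1, h2⟩ := (h.and self_mem_nhdsWithin).exists
  exact ⟨e, h2, h1⟩

lemma wg_grad {n : ℕ} (f : EuclideanSpace ℝ (Fin n) → ℝ) (x p : EuclideanSpace ℝ (Fin n))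
    (hf : ConvexOn ℝ Set.univ f) (hd : DifferentiableAt ℝ f x) :
    f x - f p ≤ ∑ i, gradient f x i * (x i - p i) := by
  have hin : ∑ i, gradient f x i * (x i - p i) = fderiv ℝ f x (x - p) := by
    have h := hd.hasGradientAt.hasFDerivAt.fderiv
    rw [h, InnerProductSpace.toDual_apply_apply, PiLp.inner_apply]
    apply Finset.sum_congr rfl
    intro i _
    simp [mul_comm]
  rw [hin]
  let l : ℝ →ᵃ[ℝ] EuclideanSpace ℝ (Fin n) := AffineMap.lineMap x p
  have hg : ConvexOn ℝ Set.univ (f ∘ l) := by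
    simpa using hf.comp_affineMap l
  have hl : HasDerivAt (fun t : ℝ => l t) (p - x) 0 := by
    exact AffineMap.hasDerivAt_lineMap
  have hgd : HasDerivAt (f ∘ l) (fderiv ℝ f x (p - x)) 0 := by
    have h0 : l 0 = x := AffineMap.lineMap_apply_zero x p
    apply HasFDerivAt.comp_hasDerivAt (0 : ℝ) _ hl
    rw [h0]
    exact hd.hasFDerivAt
  have h := hg.le_slope_of_hasDerivAt (Set.mem_univ 0) (Set.mem_univ 1) zero_lt_one hgd
  have e0 : (f ∘ l) 0 = f x := by simp [l]
  have e1 : (f ∘ l) 1 = f p := by simp [l]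
  rw [slope_def_field, e0, e1] at h
  have h2 : fderiv ℝ f x (x - p) = - fderiv ℝ f x (p - x) := by
    rw [← map_neg, neg_sub]
  rw [h2]
  simp at h
  simp
  linarith

lemma wg_grad_neg {n : ℕ} (f : EuclideanSpace ℝ (Fin n) → ℝ) (x p : EuclideanSpace ℝ (Fin n))
    (hf : ConcaveOn ℝ Set.univ f) (hd : DifferentiableAt ℝ f x) :
    ∑ i, gradient f x i * (x i - p i) ≤ f x - f p := by
  have h := wg_grad (-f) x p hf.neg hd.neg
  have hg : gradient (-f) x = - gradient f x := by
    simp [gradient, fderiv_neg]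
  simp only [hg, PiLp.neg_apply, Pi.neg_apply, neg_mul, Finset.sum_neg_distrib] at h
  linarith

/-- **Stability of the saddle point for weighted GDA dynamics** (the transformed GDA
dynamics of a hidden convex-concave game in the operator output space). -/
theorem weighted_gda_stable
    {n m : ℕ} (L : EuclideanSpace ℝ (Fin n) × EuclideanSpace ℝ (Fin m) → ℝ)
    (hL : ContDiff ℝ 1 L)
    (hconv : ∀ y, ConvexOn ℝ Set.univ fun x => L (x, y))
    (hconc : ∀ x, ConcaveOn ℝ Set.univ fun y => L (x, y))
    (p : EuclideanSpace ℝ (Fin n)) (q : EuclideanSpace ℝ (Fin m))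
    (hsaddle : ∀ x y, L (p, y) ≤ L (p, q) ∧ L (p, q) ≤ L (x, q))
    (w : Fin n → ℝ → ℝ) (v : Fin m → ℝ → ℝ)
    (a b : Fin n → ℝ) (c d : Fin m → ℝ)
    (hpI : ∀ i, p i ∈ Set.Ioo (a i) (b i)) (hqJ : ∀ j, q j ∈ Set.Ioo (c j) (d j))
    (hw : ∀ i, ContinuousOn (w i) (Set.Ioo (a i) (b i)))
    (hwpos : ∀ i, ∀ z ∈ Set.Ioo (a i) (b i), 0 < w i z)
    (hv : ∀ j, ContinuousOn (v j) (Set.Ioo (c j) (d j)))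
    (hvpos : ∀ j, ∀ z ∈ Set.Ioo (c j) (d j), 0 < v j z) :
    ∀ ε > 0, ∃ δ > 0,
      ∀ (x : ℝ → EuclideanSpace ℝ (Fin n)) (y : ℝ → EuclideanSpace ℝ (Fin m)),
        (∀ t : ℝ, 0 ≤ t →
          (∀ i, x t i ∈ Set.Ioo (a i) (b i)) ∧ (∀ j, y t j ∈ Set.Ioo (c j) (d j))) →
        (∀ i, ∀ t : ℝ, 0 ≤ t → HasDerivAt (fun s => x s i)
          (-(w i (x t i) * gradient (fun x' => L (x', y t)) (x t) i)) t) →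
        (∀ j, ∀ t : ℝ, 0 ≤ t → HasDerivAt (fun s => y s j)
          (v j (y t j) * gradient (fun y' => L (x t, y')) (y t) j) t) →
        dist (x 0, y 0) (p, q) < δ →
        ∀ t : ℝ, 0 ≤ t → dist (x t, y t) (p, q) < ε := by
  intro ε hε
  choose Φ hΦd hΦ0 hΦn hΦe using fun i => wg_phi (a i) (b i) (p i) (w i) (hpI i) (hw i) (hwpos i)
  choose Ψ hΨd hΨ0 hΨn hΨe using fun j => wg_phi (c j) (d j) (q j) (v j) (hqJ j) (hv j) (hvpos j)
  obtain ⟨e1, he1, hd1⟩ := wg_dist n ε hε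
  obtain ⟨e2, he2, hd2⟩ := wg_dist m ε hε
  choose η1 hη1 hη1' using fun i => hΦe i e1 he1
  choose η2 hη2 hη2' using fun i => hΨe i e2 he2
  obtain ⟨η1m, hη1m, hη1le⟩ := wg_min η1 hη1
  obtain ⟨η2m, hη2m, hη2le⟩ := wg_min η2 hη2
  let V : EuclideanSpace ℝ (Fin n) × EuclideanSpace ℝ (Fin m) → ℝ :=
    fun z => ∑ i, Φ i (z.1 i) + ∑ j, Ψ j (z.2 j)
  have hV0 : V (p, q) = 0 := by simp [V, hΦ0, hΨ0]
  have hVc : ContinuousAt V (p, q) := by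
    apply ContinuousAt.add
    · refine tendsto_finsetSum _ fun i _ => ?_
      exact ContinuousAt.comp (f := fun z : EuclideanSpace ℝ (Fin n) × EuclideanSpace ℝ (Fin m) =>
        z.1 i) (hΦd i (p i) (hpI i)).continuousAt (by fun_prop)
    · refine tendsto_finsetSum _ fun i _ => ?_
      exact ContinuousAt.comp (f := fun z : EuclideanSpace ℝ (Fin n) × EuclideanSpace ℝ (Fin m) =>
        z.2 i) (hΨd i (q i) (hqJ i)).continuousAt (by fun_prop)
  have hev : ∀ᶠ z in nhds (p, q), V z < min η1m η2m :=
    hVc.eventually_lt_const (by rw [hV0]; exact lt_min hη1m hη2m)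
  obtain ⟨δ, hδ, hball⟩ := Metric.eventually_nhds_iff.1 hev
  refine ⟨δ, hδ, fun x y hbox hx hy h0 t ht => ?_⟩
  have hVd : ∀ s : ℝ, 0 ≤ s → ∃ V' ≤ 0, HasDerivAt (fun s => V (x s, y s)) V' s := by
    intro s hs
    have hb := hbox s hs
    have hLd : Differentiable ℝ L := hL.differentiable one_ne_zero
    have g1 := wg_grad (fun x' => L (x', y s)) (x s) p (hconv _) (by fun_prop)
    have g2 := wg_grad_neg (fun y' => L (x s, y')) (y s) q (hconc _) (by fun_prop)
    have hs1 := (hsaddle (x s) (y s)).1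
    have hs2 := (hsaddle (x s) (y s)).2
    refine ⟨_, ?_, (HasDerivAt.fun_sum fun i _ =>
      (hΦd i (x s i) (hb.1 i)).comp s (hx i s hs)).add (HasDerivAt.fun_sum fun j _ =>
      (hΨd j (y s j) (hb.2 j)).comp s (hy j s hs))⟩
    have r1 : ∑ i, (x s i - p i) / w i (x s i) *
        -(w i (x s i) * gradient (fun x' => L (x', y s)) (x s) i) =
        - ∑ i, gradient (fun x' => L (x', y s)) (x s) i * (x s i - p i) := by
      rw [← Finset.sum_neg_distrib]
      refine Finset.sum_congr rfl fun i _ => ?_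
      have := (hwpos i _ (hb.1 i)).ne'
      field_simp
    have r2 : ∑ i, (y s i - q i) / v i (y s i) *
        (v i (y s i) * gradient (fun y' => L (x s, y')) (y s) i) =
        ∑ i, gradient (fun y' => L (x s, y')) (y s) i * (y s i - q i) := by
      refine Finset.sum_congr rfl fun i _ => ?_
      have := (hvpos i _ (hb.2 i)).ne'
      field_simp
    rw [r1, r2]
    linarith
  have hanti : AntitoneOn (fun s => V (x s, y s)) (Set.Ici 0) := by
    apply antitoneOn_of_deriv_nonpos (convex_Ici 0)
    · intro s hs
      obtain ⟨V', _, h⟩ := hVd s hs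
      exact h.continuousAt.continuousWithinAt
    · intro s hs
      obtain ⟨V', _, h⟩ := hVd s (interior_subset hs)
      exact h.differentiableAt.differentiableWithinAt
    · intro s hs
      obtain ⟨V', h', h⟩ := hVd s (interior_subset hs)
      rw [h.deriv]
      exact h'
  have hVt : V (x t, y t) < min η1m η2m :=
    (hanti (Set.mem_Ici.2 le_rfl) (Set.mem_Ici.2 ht) ht).trans_lt (hball h0)
  rw [lt_min_iff] at hVt
  have hb := hbox t ht
  have n1 : 0 ≤ ∑ i, Φ i (x t i) := Finset.sum_nonneg fun i _ => hΦn i _ (hb.1 i)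
  have n2 : 0 ≤ ∑ i, Ψ i (y t i) := Finset.sum_nonneg fun i _ => hΨn i _ (hb.2 i)
  have hVe : V (x t, y t) = ∑ i, Φ i (x t i) + ∑ i, Ψ i (y t i) := rfl
  rw [Prod.dist_eq]
  apply max_lt
  · apply hd1
    intro i
    by_contra! hcon
    have k1 := hη1' i _ (hb.1 i) hcon
    have k2 := Finset.single_le_sum (f := fun i => Φ i (x t i))
      (fun i _ => hΦn i _ (hb.1 i)) (Finset.mem_univ i)
    have k3 := hη1le i
    simp only at k2
    linarith [hVt.1]
  · apply hd2
    intro i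
    by_contra! hcon
    have k1 := hη2' i _ (hb.2 i) hcon
    have k2 := Finset.single_le_sum (f := fun i => Ψ i (y t i))
      (fun i _ => hΨn i _ (hb.2 i)) (Finset.mem_univ i)
    have k3 := hη2le i
    simp only at k2
    linarith [hVt.2]
end

section
/- Let L : ℝ^n × ℝ^m → ℝ be C¹ and strictly convex-concave, and suppose its set of saddle points Solution(L) is nonempty. Then Solution(L) is locally asymptotically stable for the continuous gradient descent ascent dynamics ẋ(t) = −∇_x L(x(t),y(t)), ẏ(t) = ∇_y L(x(t),y(t)): there exists an open set R containing Solution(L) such that every C¹ solution (x(t),y(t)) defined for all t ≥ 0 with (x(0),y(0)) ∈ R satisfies dist((x(t),y(t)), Solution(L)) → 0 as t → ∞. -/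
open Filter Topology
theorem barbalat {E : Type*} [NormedAddCommGroup E] [NormedSpace ℝ E] {f f' : ℝ → E} {l : E}
    (hf : ∀ t, 0 ≤ t → HasDerivAt f (f' t) t) (hl : Tendsto f atTop (𝓝 l))
    (hu : UniformContinuousOn f' (Set.Ici 0)) : Tendsto f' atTop (𝓝 0) := by
  rw [Metric.tendsto_atTop]
  intro ε hε
  rw [Metric.uniformContinuousOn_iff] at hu
  obtain ⟨δ, hδ, hu⟩ := hu (ε / 4) (by positivity)
  rw [Metric.tendsto_atTop] at hl
  obtain ⟨N, hN⟩ := hl (ε * δ / 16) (by positivity)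
  refine ⟨max N 0, fun t ht => ?_⟩
  have ht0 : 0 ≤ t := le_trans (le_max_right _ _) ht
  have htN : N ≤ t := le_trans (le_max_left _ _) ht
  have h1 := Convex.norm_image_sub_le_of_norm_hasDerivWithin_le
    (f := fun s => f s - s • f' t) (f' := fun s => f' s - (1:ℝ) • f' t) (s := Set.Icc t (t + δ / 2))
    (x := t) (y := t + δ / 2) (C := ε / 4)
    (fun s hs => ((hf s (ht0.trans hs.1)).sub ((hasDerivAt_id s).smul_const (f' t))).hasDerivWithinAt)
    (fun s hs => by
      have := hu s (ht0.trans hs.1) t ht0 (by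
        rw [Real.dist_eq, abs_of_nonneg (by linarith [hs.1])]; linarith [hs.2])
      rw [dist_eq_norm] at this
      simpa using this.le)
    (convex_Icc _ _) ⟨le_rfl, by linarith⟩ ⟨by linarith, le_rfl⟩
  have h2 := hN t htN
  have h3 := hN (t + δ / 2) (by linarith)
  have h4 : ‖f (t + δ / 2) - f t‖ < ε * δ / 8 := by
    rw [← dist_eq_norm]
    have := dist_triangle_right (f (t + δ / 2)) (f t) l
    linarith
  have h5 : (δ / 2) • f' t = (f (t + δ / 2) - f t) -
      ((f (t + δ / 2) - (t + δ / 2) • f' t) - (f t - t • f' t)) := by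
    rw [add_smul]; abel
  have h6 : ‖(δ / 2) • f' t‖ ≤ ‖f (t + δ / 2) - f t‖ +
      ‖(f (t + δ / 2) - (t + δ / 2) • f' t) - (f t - t • f' t)‖ := by
    rw [h5]; exact norm_sub_le _ _
  rw [norm_smul, Real.norm_of_nonneg (by positivity)] at h6
  rw [show t + δ / 2 - t = δ / 2 by ring, Real.norm_of_nonneg (by positivity)] at h1
  rw [dist_zero_right]
  by_contra! hc
  have := mul_le_mul_of_nonneg_left hc (show 0 ≤ δ / 2 by positivity)
  nlinarith

theorem grad_ineq {E : Type*} [NormedAddCommGroup E] [InnerProductSpace ℝ E] [CompleteSpace E]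
    {f : E → ℝ} {g x : E} (hc : ConvexOn ℝ Set.univ f) (hg : HasGradientAt f g x) (x' : E) :
    f x + inner ℝ g (x' - x) ≤ f x' := by
  have hc' : ConvexOn ℝ Set.univ (fun s : ℝ => f (AffineMap.lineMap x x' s)) :=
    hc.comp_affineMap (AffineMap.lineMap x x' : ℝ →ᵃ[ℝ] E)
  have hd : HasDerivAt (fun s : ℝ => f (AffineMap.lineMap x x' s)) (inner ℝ g (x' - x)) 0 := by
    have h1 : HasDerivAt (AffineMap.lineMap x x' : ℝ → E) (x' - x) 0 := AffineMap.hasDerivAt_lineMap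
    have h2 : HasFDerivAt f (InnerProductSpace.toDual ℝ E g) (AffineMap.lineMap x x' (0:ℝ)) := by
      simpa using hg.hasFDerivAt
    have h3 := h2.comp_hasDerivAt (0:ℝ) h1
    rw [InnerProductSpace.toDual_apply_apply] at h3
    exact h3
  have := hc'.le_slope_of_hasDerivAt (Set.mem_univ (0:ℝ)) (Set.mem_univ (1:ℝ)) one_pos hd
  simp [slope_def_field] at this
  linarith

theorem lim_of_ultra {X Y : Type*} [TopologicalSpace X] [TopologicalSpace Y] {z : ℝ → X} {K : Set X}
    (hK : IsCompact K) (hz : ∀ t, 0 ≤ t → z t ∈ K) {h : X → Y} (hh : Continuous h) {c : Y}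
    (H : ∀ (U : Ultrafilter ℝ) (w : X), (U : Filter ℝ) ≤ atTop → Tendsto z U (𝓝 w) → h w = c) :
    Tendsto (fun t => h (z t)) atTop (𝓝 c) := by
  rw [tendsto_iff_ultrafilter]
  intro U hU
  obtain ⟨w, -, hw⟩ := hK.ultrafilter_le_nhds (U.map z) (by
    rw [le_principal_iff]
    exact hU ((eventually_ge_atTop 0).mono hz))
  have hw' : Tendsto z U (𝓝 w) := hw
  rw [← H U w hU hw']
  exact (hh.tendsto w).comp hw'

theorem core {E F : Type*} [NormedAddCommGroup E] [InnerProductSpace ℝ E] [FiniteDimensional ℝ E]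
    [NormedAddCommGroup F] [InnerProductSpace ℝ F] [FiniteDimensional ℝ F]
    (L : E × F → ℝ) (hL : Continuous L) (gx : E × F → E) (gy : E × F → F)
    (hgx : Continuous gx) (hgy : Continuous gy)
    (hx : ∀ z x', L z + inner ℝ (gx z) (x' - z.1) ≤ L (x', z.2))
    (hy : ∀ z y', L (z.1, y') ≤ L z + inner ℝ (gy z) (y' - z.2))
    (p : E) (q : F) (hs : ∀ x y, L (p, y) ≤ L (p, q) ∧ L (p, q) ≤ L (x, q))
    (hst : ∀ x, L (x, q) = L (p, q) → x = p)
    (z : ℝ → E × F) 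
    (hdx : ∀ t, 0 ≤ t → HasDerivAt (fun t => (z t).1) (-gx (z t)) t)
    (hdy : ∀ t, 0 ≤ t → HasDerivAt (fun t => (z t).2) (gy (z t)) t) :
    ∃ K : Set (E × F), IsCompact K ∧ (∀ t, 0 ≤ t → z t ∈ K) ∧
      ∀ (U : Ultrafilter ℝ) (w : E × F), (U : Filter ℝ) ≤ atTop → Tendsto z U (𝓝 w) → 
        ∀ x y, L (w.1, y) ≤ L (w.1, w.2) ∧ L (w.1, w.2) ≤ L (x, w.2) := by
  have hpE : ProperSpace E := FiniteDimensional.proper ℝ E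
  have hpF : ProperSpace F := FiniteDimensional.proper ℝ F
  set V : ℝ → ℝ := fun t => ‖(z t).1 - p‖ ^ 2 + ‖(z t).2 - q‖ ^ 2 with hV
  set W : E × F → ℝ := fun w => 2 * inner ℝ (w.1 - p) (-gx w) + 2 * inner ℝ (w.2 - q) (gy w) with hW
  have hVd : ∀ t, 0 ≤ t → HasDerivAt V (W (z t)) t := fun t ht =>
    ((hdx t ht).sub_const p).norm_sq.add ((hdy t ht).sub_const q).norm_sq
  have hWle : ∀ w : E × F, W w ≤ 2 * (L (p, w.2) - L (w.1, q)) := by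
    intro w
    have h1 := hx w p
    have h2 := hy w q
    have e1 : inner ℝ (w.1 - p) (-gx w) = inner ℝ (gx w) (p - w.1) := by
      rw [real_inner_comm, ← neg_sub p w.1, inner_neg_neg]
    have e2 : inner ℝ (w.2 - q) (gy w) = - inner ℝ (gy w) (q - w.2) := by
      rw [real_inner_comm, ← neg_sub q w.2, inner_neg_right]
    simp only [hW, e1, e2]
    linarith
  have hW0 : ∀ w : E × F, W w ≤ 0 := fun w => by
    have := hWle w
    have h1 := hs w.1 w.2
    linarith [h1.1, h1.2]
  have hVanti : AntitoneOn V (Set.Ici 0) := by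
    refine antitoneOn_of_hasDerivWithinAt_nonpos (f' := fun t => W (z t)) (convex_Ici 0)
      (fun t ht => (hVd t ht).continuousAt.continuousWithinAt) (fun t ht => ?_) (fun t _ => hW0 _)
    rw [interior_Ici] at ht
    exact (hVd t (le_of_lt ht)).hasDerivWithinAt
  have hVlim : ∃ l, Tendsto V atTop (𝓝 l) := by
    have hanti : Antitone (fun t => V (max t 0)) := fun a b hab =>
      hVanti (Set.mem_Ici.2 (le_max_right _ _)) (Set.mem_Ici.2 (le_max_right _ _)) (max_le_max_right 0 hab)
    refine ⟨_, (tendsto_atTop_ciInf hanti ⟨0, ?_⟩).congr' ?_⟩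
    · rintro _ ⟨t, rfl⟩
      simp only [hV]; positivity
    · filter_upwards [eventually_ge_atTop 0] with t ht
      rw [max_eq_left ht]
  set r := Real.sqrt (V 0) with hr
  set K : Set (E × F) := Metric.closedBall p r ×ˢ Metric.closedBall q r with hKdef
  have hK : IsCompact K := (isCompact_closedBall p r).prod (isCompact_closedBall q r)
  have hzK : ∀ t, 0 ≤ t → z t ∈ K := by
    intro t ht
    have h := hVanti (Set.mem_Ici.2 le_rfl) (Set.mem_Ici.2 ht) ht
    constructor
    · rw [Metric.mem_closedBall, dist_eq_norm]
      apply Real.le_sqrt_of_sq_le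
      refine le_trans ?_ h
      simp only [hV]
      linarith [sq_nonneg ‖(z t).2 - q‖]
    · rw [Metric.mem_closedBall, dist_eq_norm]
      apply Real.le_sqrt_of_sq_le
      refine le_trans ?_ h
      simp only [hV]
      linarith [sq_nonneg ‖(z t).1 - p‖]
  have hzd : ∀ t, 0 ≤ t → HasDerivAt z (-gx (z t), gy (z t)) t := fun t ht =>
    (hdx t ht).prodMk (hdy t ht)
  have hzu : UniformContinuousOn z (Set.Ici 0) := by
    obtain ⟨C, hC⟩ := hK.exists_bound_of_continuousOn
      (f := fun w => (-gx w, gy w)) (by fun_prop)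
    refine (Convex.lipschitzOnWith_of_nnnorm_hasDerivWithin_le (C := C.toNNReal) (convex_Ici 0)
      (fun t ht => (hzd t ht).hasDerivWithinAt) (fun t ht => ?_)).uniformContinuousOn
    rw [← NNReal.coe_le_coe, coe_nnnorm]
    exact (hC _ (hzK t ht)).trans (Real.le_coe_toNNReal C)
  have huc : ∀ {G : Type _} [NormedAddCommGroup G] (φ : E × F → G), Continuous φ →
      UniformContinuousOn (fun t => φ (z t)) (Set.Ici 0) := fun φ hφ =>
    (hK.uniformContinuousOn_of_continuous hφ.continuousOn).comp hzu (fun t ht => hzK t ht)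
  obtain ⟨l, hl⟩ := hVlim
  have hWc : Continuous W := by fun_prop
  have hWlim : Tendsto (fun t => W (z t)) atTop (𝓝 0) := barbalat hVd hl (huc W hWc)
  have key : ∀ (U : Ultrafilter ℝ) (w : E × F), (U : Filter ℝ) ≤ atTop → Tendsto z U (𝓝 w) →
      w.1 = p ∧ L (p, w.2) = L (p, q) := by
    intro U w hU hw
    have h0 : W w = 0 := tendsto_nhds_unique ((hWc.tendsto w).comp hw) (hWlim.mono_left hU)
    have h1 := hWle w
    have h2 := hs w.1 w.2
    exact ⟨hst _ (by linarith [h2.1, h2.2]), by linarith [h2.1, h2.2]⟩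
  have hxlim : Tendsto (fun t => (z t).1) atTop (𝓝 p) :=
    lim_of_ultra hK hzK continuous_fst (fun U w hU hw => (key U w hU hw).1)
  have hdlim : Tendsto (fun t => -gx (z t)) atTop (𝓝 0) :=
    barbalat hdx hxlim (by
      have hcn : Continuous (fun w => -gx w) := hgx.neg
      exact (hK.uniformContinuousOn_of_continuous hcn.continuousOn).comp hzu (fun t ht => hzK t ht))
  refine ⟨K, hK, hzK, fun U w hU hw x y => ?_⟩
  obtain ⟨h1, h2⟩ := key U w hU hw
  have h3 : -gx w = 0 := tendsto_nhds_unique ((hgx.neg.tendsto w).comp hw) (hdlim.mono_left hU)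
  rw [neg_eq_zero] at h3
  constructor
  · rw [h1, h2]; exact (hs x y).1
  · have := hx w x
    rw [h3, inner_zero_left, add_zero] at this
    exact this

theorem strict_unique {E : Type*} [NormedAddCommGroup E] [NormedSpace ℝ E] {f : E → ℝ}
    (hf : StrictConvexOn ℝ Set.univ f) {p : E} (hp : ∀ x, f p ≤ f x) (x : E) (hx : f x = f p) :
    x = p :=
  hf.eq_of_isMinOn (fun y _ => by simpa [hx] using hp y) (fun y _ => hp y) trivial trivial

theorem strict_convex_concave_locally_asymptotically_stable
    {n m : ℕ} (L : EuclideanSpace ℝ (Fin n) × EuclideanSpace ℝ (Fin m) → ℝ)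
    (hL : ContDiff ℝ 1 L)
    (hconv : ∀ y, ConvexOn ℝ Set.univ fun x => L (x, y))
    (hconc : ∀ x, ConcaveOn ℝ Set.univ fun y => L (x, y))
    (hstrict : ∀ x y, (StrictConvexOn ℝ Set.univ fun x' => L (x', y)) ∨
      (StrictConcaveOn ℝ Set.univ fun y' => L (x, y')))
    (hsol : ∃ p q, ∀ x y, L (p, y) ≤ L (p, q) ∧ L (p, q) ≤ L (x, q)) :
    ∃ R : Set (EuclideanSpace ℝ (Fin n) × EuclideanSpace ℝ (Fin m)),
      IsOpen R ∧
      {z : EuclideanSpace ℝ (Fin n) × EuclideanSpace ℝ (Fin m) |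
        ∀ x y, L (z.1, y) ≤ L (z.1, z.2) ∧ L (z.1, z.2) ≤ L (x, z.2)} ⊆ R ∧
      ∀ (x : ℝ → EuclideanSpace ℝ (Fin n)) (y : ℝ → EuclideanSpace ℝ (Fin m)),
        (∀ t : ℝ, 0 ≤ t →
          HasDerivAt x (-gradient (fun x' => L (x', y t)) (x t)) t) →
        (∀ t : ℝ, 0 ≤ t →
          HasDerivAt y (gradient (fun y' => L (x t, y')) (y t)) t) →
        (x 0, y 0) ∈ R →
        Filter.Tendsto (fun t => Metric.infDist (x t, y t)
          {z : EuclideanSpace ℝ (Fin n) × EuclideanSpace ℝ (Fin m) |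
            ∀ x' y', L (z.1, y') ≤ L (z.1, z.2) ∧ L (z.1, z.2) ≤ L (x', z.2)})
          Filter.atTop (nhds 0) := by
  refine ⟨Set.univ, isOpen_univ, Set.subset_univ _, fun x y hdx hdy _ => ?_⟩
  obtain ⟨p, q, hs⟩ := hsol
  have hLc : Continuous L := hL.continuous
  have hfc : Continuous (fderiv ℝ L) := hL.continuous_fderiv one_ne_zero
  have hLd : Differentiable ℝ L := hL.differentiable one_ne_zero
  set gx : EuclideanSpace ℝ (Fin n) × EuclideanSpace ℝ (Fin m) → EuclideanSpace ℝ (Fin n) :=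
    fun z => gradient (fun x' => L (x', z.2)) z.1 with hgxdef
  set gy : EuclideanSpace ℝ (Fin n) × EuclideanSpace ℝ (Fin m) → EuclideanSpace ℝ (Fin m) :=
    fun z => gradient (fun y' => L (z.1, y')) z.2 with hgydef
  have hfx : ∀ z : EuclideanSpace ℝ (Fin n) × EuclideanSpace ℝ (Fin m),
      HasFDerivAt (fun x' => L (x', z.2))
        ((fderiv ℝ L z).comp (ContinuousLinearMap.inl ℝ _ _)) z.1 := fun z =>
    HasFDerivAt.comp (g := L) z.1 (hLd z).hasFDerivAt (hasFDerivAt_prodMk_left z.1 z.2)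
  have hfy : ∀ z : EuclideanSpace ℝ (Fin n) × EuclideanSpace ℝ (Fin m),
      HasFDerivAt (fun y' => L (z.1, y'))
        ((fderiv ℝ L z).comp (ContinuousLinearMap.inr ℝ _ _)) z.2 := fun z =>
    HasFDerivAt.comp (g := L) z.2 (hLd z).hasFDerivAt (hasFDerivAt_prodMk_right z.1 z.2)
  have hgx : Continuous gx := by
    have : gx = fun z => (InnerProductSpace.toDual ℝ _).symm
        ((fderiv ℝ L z).comp (ContinuousLinearMap.inl ℝ _ _)) := by
      funext z
      simp only [hgxdef, gradient, (hfx z).fderiv]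
    rw [this]
    exact (LinearIsometryEquiv.continuous _).comp (hfc.clm_comp continuous_const)
  have hgy : Continuous gy := by
    have : gy = fun z => (InnerProductSpace.toDual ℝ _).symm
        ((fderiv ℝ L z).comp (ContinuousLinearMap.inr ℝ _ _)) := by
      funext z
      simp only [hgydef, gradient, (hfy z).fderiv]
    rw [this]
    exact (LinearIsometryEquiv.continuous _).comp (hfc.clm_comp continuous_const)
  have hx : ∀ z x', L z + inner ℝ (gx z) (x' - z.1) ≤ L (x', z.2) := fun z x' =>
    grad_ineq (hconv z.2) (hfx z).differentiableAt.hasGradientAt x'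
  have hy : ∀ z y', L (z.1, y') ≤ L z + inner ℝ (gy z) (y' - z.2) := fun z y' => by
    have h := grad_ineq (f := fun y' => -L (z.1, y')) (g := -gy z) (x := z.2) (hconc z.1).neg (by
      have := (hfy z).differentiableAt.hasGradientAt.hasFDerivAt.neg
      rw [hasGradientAt_iff_hasFDerivAt, map_neg]
      exact this) y'
    rw [inner_neg_left] at h
    linarith
  have main : ∃ K : Set (EuclideanSpace ℝ (Fin n) × EuclideanSpace ℝ (Fin m)), IsCompact K ∧
      (∀ t, 0 ≤ t → (x t, y t) ∈ K) ∧
      ∀ (U : Ultrafilter ℝ) (w : EuclideanSpace ℝ (Fin n) × EuclideanSpace ℝ (Fin m)),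
        (U : Filter ℝ) ≤ atTop → Tendsto (fun t => (x t, y t)) U (𝓝 w) →
        ∀ x y, L (w.1, y) ≤ L (w.1, w.2) ∧ L (w.1, w.2) ≤ L (x, w.2) := by
    rcases hstrict p q with hst | hst
    · exact core L hLc gx gy hgx hgy hx hy p q hs
        (fun x h => strict_unique hst (fun x => (hs x q).2) x h) (fun t => (x t, y t)) hdx hdy
    · obtain ⟨K, hK, hzK, H⟩ := core (fun z => -L z.swap) (hLc.comp continuous_swap).neg
        (fun z => -gy z.swap) (fun z => -gx z.swap)
        (hgy.comp continuous_swap).neg (hgx.comp continuous_swap).neg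
        (fun z x' => by
          have := hy z.swap x'
          simp only [Prod.fst_swap, Prod.snd_swap, Prod.swap_prod_mk, inner_neg_left] at this ⊢
          linarith)
        (fun z x' => by
          have := hx z.swap x'
          simp only [Prod.fst_swap, Prod.snd_swap, Prod.swap_prod_mk, inner_neg_left] at this ⊢
          linarith)
        q p (fun a b => ⟨neg_le_neg (hs b a).2, neg_le_neg (hs b a).1⟩)
        (fun a h => strict_unique (f := fun y' => -L (p, y')) hst.neg
          (fun b => neg_le_neg (hs p b).1) a h)
        (fun t => (y t, x t)) (fun t ht => by simpa using hdy t ht) (fun t ht => hdx t ht)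
      refine ⟨Prod.swap '' K, hK.image continuous_swap, fun t ht => ⟨_, hzK t ht, rfl⟩,
        fun U w hU hw a b => ?_⟩
      have := H U w.swap hU ((continuous_swap.tendsto w).comp hw) b a
      exact ⟨neg_le_neg_iff.1 this.2, neg_le_neg_iff.1 this.1⟩
  obtain ⟨K, hK, hzK, H⟩ := main
  exact lim_of_ultra hK hzK (Metric.continuous_infDist_pt _)
    (fun U w hU hw => Metric.infDist_zero_of_mem (H U w hU hw))
end

section
/- Let L : ℝ^n × ℝ^m → ℝ be C¹ and strictly convex-concave, and suppose its set of saddle points Solution(L) is nonempty. Then every C¹ solution (x(t),y(t)) of the continuous gradient descent ascent dynamics ẋ(t) = −∇_x L(x(t),y(t)), ẏ(t) = ∇_y L(x(t),y(t)) defined for all t ≥ 0 converges, as t → ∞, to a point of Solution(L). -/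
open Filter Topology

theorem gda_first_order {H : Type*} [NormedAddCommGroup H] [InnerProductSpace ℝ H] [CompleteSpace H]
    (φ : H → ℝ) (hφ : ConvexOn ℝ Set.univ φ) (g a b : H) (hg : HasGradientAt φ g a) :
    φ a + inner ℝ g (b - a) ≤ φ b := by
  have h1 : ConvexOn ℝ Set.univ (fun s : ℝ => φ (AffineMap.lineMap a b s)) := by
    exact hφ.comp_affineMap (AffineMap.lineMap a b : ℝ →ᵃ[ℝ] H)
  have h2 : HasDerivAt (fun s : ℝ => φ (AffineMap.lineMap a b s)) (inner ℝ g (b - a)) 0 := by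
    have hl : HasDerivAt (fun s : ℝ => (AffineMap.lineMap a b s : H)) (b - a) 0 :=
      AffineMap.hasDerivAt_lineMap
    have hg' : HasFDerivAt φ (InnerProductSpace.toDual ℝ H g) (AffineMap.lineMap a b (0:ℝ)) := by
      simpa using hg.hasFDerivAt
    exact hg'.comp_hasDerivAt (0:ℝ) hl
  have h3 := h1.le_slope_of_hasDerivAt (Set.mem_univ 0) (Set.mem_univ 1) one_pos h2
  simp [slope_def_field] at h3
  linarith

theorem gda_key {Z : Type*} [NormedAddCommGroup Z] [NormedSpace ℝ Z] (z z' : ℝ → Z) (M : ℝ)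
    (hz : ∀ t, 0 ≤ t → HasDerivAt z (z' t) t) (hM : ∀ t, 0 ≤ t → ‖z' t‖ ≤ M)
    (f f' : ℝ → ℝ) (G : Z → ℝ) (hf : ∀ t, 0 ≤ t → HasDerivAt f (f' t) t)
    (hfG : ∀ t, 0 ≤ t → f' t ≤ - G (z t)) (l : ℝ) (hl : Tendsto f atTop (𝓝 l))
    (w : Z) (hG : ContinuousAt G w) (hw : MapClusterPt w atTop z) : G w ≤ 0 := by
  by_contra! hpos
  have hM0 : 0 ≤ M := (norm_nonneg _).trans (hM 0 le_rfl)
  obtain ⟨r, hr, hball⟩ := Metric.eventually_nhds_iff.1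
    (hG.eventually (lt_mem_nhds (show G w / 2 < G w by linarith)))
  set c := G w / 2 with hc
  have hc0 : 0 < c := by positivity
  set τ := r / (2 * (M + 1)) with hτ
  have hτ0 : 0 < τ := by positivity
  have hMτ : M * τ < r / 2 := by
    have : (M + 1) * τ = r / 2 := by rw [hτ]; field_simp
    nlinarith
  obtain ⟨T, hT⟩ := Filter.eventually_atTop.1
    (hl.eventually (Metric.ball_mem_nhds l (show 0 < c * τ / 2 by positivity)))
  have hfr := hw.frequently (Metric.ball_mem_nhds w (show 0 < r / 2 by positivity))
  obtain ⟨t, ht1, ht2⟩ := (hfr.and_eventually (eventually_ge_atTop (max T 0))).exists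
  have htT : T ≤ t := (le_max_left _ _).trans ht2
  have ht0 : 0 ≤ t := (le_max_right _ _).trans ht2
  have hnear : ∀ s ∈ Set.Icc t (t + τ), c < G (z s) := by
    intro s hs
    apply hball
    have h1 := (convex_Icc t (t + τ)).norm_image_sub_le_of_norm_hasDerivWithin_le (f := z)
      (f' := z') (C := M) (fun u hu => (hz u (ht0.trans hu.1)).hasDerivWithinAt)
      (fun u hu => hM u (ht0.trans hu.1)) (Set.left_mem_Icc.2 (by linarith)) hs
    have h2 : ‖s - t‖ ≤ τ := by
      rw [Real.norm_eq_abs, abs_of_nonneg (by linarith [hs.1])]; linarith [hs.2]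
    have h3 : dist (z t) w < r / 2 := ht1
    have h4 : dist (z s) (z t) ≤ M * τ := by
      rw [dist_eq_norm]; exact h1.trans (by gcongr)
    linarith [dist_triangle (z s) (z t) w]
  obtain ⟨u, hu, hu'⟩ := exists_hasDerivAt_eq_slope f f' (show t < t + τ by linarith)
    (fun u hu => (hf u (ht0.trans hu.1)).continuousAt.continuousWithinAt)
    (fun u hu => hf u (ht0.trans hu.1.le))
  have h5 := hfG u (ht0.trans hu.1.le)
  have h6 := hnear u ⟨hu.1.le, hu.2.le⟩
  have h7 : f (t + τ) - f t = f' u * τ := by rw [hu', add_sub_cancel_left, div_mul_cancel₀ _ hτ0.ne']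
  have h8 : dist (f t) l < c * τ / 2 := hT t htT
  have h9 : dist (f (t + τ)) l < c * τ / 2 := hT (t + τ) (by linarith)
  rw [Real.dist_eq, abs_lt] at h8 h9
  nlinarith

theorem gda_core {E F : Type*} [NormedAddCommGroup E] [InnerProductSpace ℝ E]
    [FiniteDimensional ℝ E] [NormedAddCommGroup F] [InnerProductSpace ℝ F] [FiniteDimensional ℝ F]
    (L : E × F → ℝ) (hL : Continuous L) (A : E × F → E) (B : E × F → F)
    (hAc : Continuous A) (hBc : Continuous B)
    (hA : ∀ x y p', L (x, y) - inner ℝ (A (x, y)) (p' - x) ≤ L (p', y))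
    (hB : ∀ x y q', L (x, q') ≤ L (x, y) + inner ℝ (B (x, y)) (q' - y))
    (p : E) (q : F) (hs : ∀ x y, L (p, y) ≤ L (p, q) ∧ L (p, q) ≤ L (x, q))
    (hstr : ∀ x, L (x, q) = L (p, q) → x = p)
    (x : ℝ → E) (y : ℝ → F)
    (hx : ∀ t : ℝ, 0 ≤ t → HasDerivAt x (A (x t, y t)) t)
    (hy : ∀ t : ℝ, 0 ≤ t → HasDerivAt y (B (x t, y t)) t) :
    ∃ p q, (∀ x' y', L (p, y') ≤ L (p, q) ∧ L (p, q) ≤ L (x', q)) ∧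
      Tendsto (fun t => (x t, y t)) atTop (𝓝 (p, q)) := by
  have := FiniteDimensional.proper ℝ E
  have := FiniteDimensional.proper ℝ F
  -- Lyapunov
  let V : E → F → ℝ → ℝ := fun a b t => ‖x t - a‖ ^ 2 + ‖y t - b‖ ^ 2
  let V' : E → F → ℝ → ℝ := fun a b t => 2 * inner ℝ (x t - a) (A (x t, y t)) +
    2 * inner ℝ (y t - b) (B (x t, y t))
  have hV : ∀ a b t, 0 ≤ t → HasDerivAt (V a b) (V' a b t) t := fun a b t ht =>
    ((hx t ht).sub_const a).norm_sq.add ((hy t ht).sub_const b).norm_sq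
  have hV' : ∀ a b t, V' a b t ≤ -(2 * (L (x t, b) - L (a, y t))) := by
    intro a b t
    have h1 := hA (x t) (y t) a
    have h2 := hB (x t) (y t) b
    have e1 : inner ℝ (A (x t, y t)) (a - x t) = - inner ℝ (x t - a) (A (x t, y t)) := by
      rw [real_inner_comm, ← inner_neg_left, neg_sub]
    have e2 : inner ℝ (B (x t, y t)) (b - y t) = - inner ℝ (y t - b) (B (x t, y t)) := by
      rw [real_inner_comm, ← inner_neg_left, neg_sub]
    rw [e1] at h1
    rw [e2] at h2
    simp only [V']
    linarith
  have hanti : ∀ a b, (∀ x' y', L (a, y') ≤ L (a, b) ∧ L (a, b) ≤ L (x', b)) →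
      AntitoneOn (V a b) (Set.Ici 0) := by
    intro a b hab
    apply antitoneOn_of_hasDerivWithinAt_nonpos (f' := V' a b) (convex_Ici 0)
    · exact fun t ht => (hV a b t ht).continuousAt.continuousWithinAt
    · intro t ht
      rw [interior_Ici] at ht
      exact (hV a b t (le_of_lt ht)).hasDerivWithinAt
    · intro t ht
      have := hV' a b t
      have := hab (x t) (y t)
      linarith
  have hVnn : ∀ a b t, 0 ≤ V a b t := fun a b t => by positivity
  -- convergence of V
  have hVlim : ∃ l, Tendsto (V p q) atTop (𝓝 l) := by
    have hmono : Antitone (fun t => V p q (max t 0)) := fun s t hst =>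
      hanti p q hs (Set.mem_Ici.2 (le_max_right _ _)) (Set.mem_Ici.2 (le_max_right _ _)) (max_le_max_right 0 hst)
    refine ⟨_, (tendsto_atTop_ciInf hmono ⟨0, ?_⟩).congr' ?_⟩
    · rintro _ ⟨t, rfl⟩; exact hVnn _ _ _
    · filter_upwards [eventually_ge_atTop 0] with t ht
      rw [max_eq_left ht]
  obtain ⟨l, hl⟩ := hVlim
  -- boundedness
  set R := Real.sqrt (V p q 0) with hR
  let K : Set (E × F) := Metric.closedBall p R ×ˢ Metric.closedBall q R
  have hK : IsCompact K := (isCompact_closedBall _ _).prod (isCompact_closedBall _ _)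
  have hzK : ∀ t, 0 ≤ t → (x t, y t) ∈ K := by
    intro t ht
    have h := hanti p q hs (Set.mem_Ici.2 le_rfl) (Set.mem_Ici.2 ht) ht
    have h' : ‖x t - p‖ ^ 2 + ‖y t - q‖ ^ 2 ≤ V p q 0 := h
    constructor
    · simp only [mem_closedBall_iff_norm]
      exact Real.le_sqrt_of_sq_le (by nlinarith [sq_nonneg ‖y t - q‖])
    · simp only [mem_closedBall_iff_norm]
      exact Real.le_sqrt_of_sq_le (by nlinarith [sq_nonneg ‖x t - p‖])
  obtain ⟨M, hM⟩ := hK.exists_bound_of_continuousOn (hAc.prodMk hBc).continuousOn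
  let z : ℝ → E × F := fun t => (x t, y t)
  have hz : ∀ t, 0 ≤ t → HasDerivAt z (A (z t), B (z t)) t := fun t ht =>
    (hx t ht).prodMk (hy t ht)
  have hzM : ∀ t, 0 ≤ t → ‖(A (z t), B (z t))‖ ≤ M := fun t ht => hM _ (hzK t ht)
  have hzK' : ∀ᶠ t in atTop, z t ∈ K := by
    filter_upwards [eventually_ge_atTop 0] with t ht using hzK t ht
  have hcl : ∀ w : E × F, MapClusterPt w atTop z → w.1 = p ∧ L (p, w.2) = L (p, q) := by
    intro w hw
    have h := gda_key z _ M hz hzM (V p q) (V' p q) (fun w => 2 * (L (w.1, q) - L (p, w.2)))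
      (hV p q) (fun t _ => hV' p q t) l hl w (by fun_prop) hw
    have h1 := hs w.1 w.2
    exact ⟨hstr _ (by linarith), by linarith⟩
  have hxp : Tendsto x atTop (𝓝 p) := by
    refine (isCompact_closedBall p R).tendsto_nhds_of_unique_mapClusterPt ?_ ?_
    · filter_upwards [hzK'] with t ht using ht.1
    · intro a _ ha
      obtain ⟨U, hU, hUa⟩ := mapClusterPt_iff_ultrafilter.1 ha
      obtain ⟨w, hwK, hw⟩ := hK.ultrafilter_le_nhds (U.map z)
        (le_principal_iff.2 (hU hzK'))
      have hzw : MapClusterPt w atTop z := mapClusterPt_iff_ultrafilter.2 ⟨U, hU, hw⟩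
      have h1 : Tendsto x U (𝓝 w.1) := (continuous_fst.tendsto w).comp (show Tendsto z U (𝓝 w) from hw)
      rw [tendsto_nhds_unique hUa h1]
      exact (hcl w hzw).1
  obtain ⟨w, hwK, hw⟩ := hK.exists_mapClusterPt (f := atTop) (u := z) (le_principal_iff.2 hzK')
  obtain ⟨hw1, hw2⟩ := hcl w hw
  obtain ⟨a, b⟩ := w
  simp only at hw1 hw2
  subst hw1
  have hA0 : A (a, b) = 0 := by
    have h := gda_key z _ M hz hzM (fun t => -inner ℝ (A (a, b)) (x t))
      (fun t => - inner ℝ (A (a, b)) (A (z t)))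
      (fun w => inner ℝ (A (a, b)) (A w))
      (fun t ht => by
        have := ((hasDerivAt_const t (A (a, b))).inner ℝ (hx t ht)).neg
        rw [inner_zero_left, add_zero] at this
        exact this) (fun t _ => le_rfl) (-inner ℝ (A (a, b)) a)
      ((tendsto_const_nhds.inner hxp).neg) (a, b) (by fun_prop) hw
    simp only [real_inner_self_eq_norm_sq] at h
    exact norm_eq_zero.1 (pow_eq_zero_iff two_ne_zero |>.1 (le_antisymm h (sq_nonneg _)))
  have hsad : ∀ x' y', L (a, y') ≤ L (a, b) ∧ L (a, b) ≤ L (x', b) := by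
    intro x' y'
    refine ⟨hw2 ▸ (hs x' y').1, ?_⟩
    have := hA a b x'
    simpa [hA0] using this
  refine ⟨a, b, hsad, ?_⟩
  have hVt : Tendsto (V a b) atTop (𝓝 0) := by
    rw [Metric.tendsto_atTop]
    intro ε hε
    have hcont : Continuous (fun w : E × F => ‖w.1 - a‖ ^ 2 + ‖w.2 - b‖ ^ 2) := by fun_prop
    have hev : ∀ᶠ w in 𝓝 (a, b), ‖w.1 - a‖ ^ 2 + ‖w.2 - b‖ ^ 2 < ε :=
      hcont.continuousAt.eventually (gt_mem_nhds (by simpa using hε))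
    obtain ⟨t, ht, ht0⟩ := ((hw.frequently hev).and_eventually (eventually_ge_atTop 0)).exists
    refine ⟨t, fun s hs' => ?_⟩
    have h := hanti a b hsad (Set.mem_Ici.2 ht0) (Set.mem_Ici.2 (ht0.trans hs')) hs'
    rw [Real.dist_eq, sub_zero, abs_of_nonneg (hVnn _ _ _)]
    exact lt_of_le_of_lt h ht
  have hsq : Tendsto (fun t => Real.sqrt (V a b t)) atTop (𝓝 0) := by
    simpa using hVt.sqrt
  refine Tendsto.prodMk_nhds hxp ?_
  rw [tendsto_iff_norm_sub_tendsto_zero]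
  exact squeeze_zero (fun t => norm_nonneg _) (fun t => Real.le_sqrt_of_sq_le
    (by simp only [V]; nlinarith [sq_nonneg ‖x t - a‖])) hsq

/-- **Pointwise convergence of GDA in strictly convex-concave games:** every GDA
trajectory converges to a saddle point of `L`. -/
theorem strict_convex_concave_gda_converges
    {n m : ℕ} (L : EuclideanSpace ℝ (Fin n) × EuclideanSpace ℝ (Fin m) → ℝ)
    (hL : ContDiff ℝ 1 L)
    (hconv : ∀ y, ConvexOn ℝ Set.univ fun x => L (x, y))
    (hconc : ∀ x, ConcaveOn ℝ Set.univ fun y => L (x, y))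
    (hstrict : ∀ x y, (StrictConvexOn ℝ Set.univ fun x' => L (x', y)) ∨
      (StrictConcaveOn ℝ Set.univ fun y' => L (x, y')))
    (hsol : ∃ p q, ∀ x y, L (p, y) ≤ L (p, q) ∧ L (p, q) ≤ L (x, q))
    (x : ℝ → EuclideanSpace ℝ (Fin n)) (y : ℝ → EuclideanSpace ℝ (Fin m))
    (hx : ∀ t : ℝ, 0 ≤ t → HasDerivAt x (-gradient (fun x' => L (x', y t)) (x t)) t)
    (hy : ∀ t : ℝ, 0 ≤ t → HasDerivAt y (gradient (fun y' => L (x t, y')) (y t)) t) :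
    ∃ p q, (∀ x' y', L (p, y') ≤ L (p, q) ∧ L (p, q) ≤ L (x', q)) ∧
      Filter.Tendsto (fun t => (x t, y t)) Filter.atTop (nhds (p, q)) := by
  have hLc := hL.continuous
  have hd : ∀ w, HasFDerivAt L (fderiv ℝ L w) w := fun w =>
    (hL.differentiable one_ne_zero w).hasFDerivAt
  have hdc : Continuous (fderiv ℝ L) := hL.continuous_fderiv one_ne_zero
  have hd1 : ∀ a b, HasFDerivAt (fun x' => L (x', b))
      ((fderiv ℝ L (a, b)).comp (ContinuousLinearMap.inl ℝ _ _)) a := fun a b =>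
    (hd (a, b)).comp a (hasFDerivAt_prodMk_left a b)
  have hd2 : ∀ a b, HasFDerivAt (fun y' => L (a, y'))
      ((fderiv ℝ L (a, b)).comp (ContinuousLinearMap.inr ℝ _ _)) b := fun a b =>
    (hd (a, b)).comp b (hasFDerivAt_prodMk_right a b)
  have hg1 : ∀ a b, HasGradientAt (fun x' => L (x', b)) (gradient (fun x' => L (x', b)) a) a :=
    fun a b => (hd1 a b).differentiableAt.hasGradientAt
  have hg2 : ∀ a b, HasGradientAt (fun y' => L (a, y')) (gradient (fun y' => L (a, y')) b) b :=
    fun a b => (hd2 a b).differentiableAt.hasGradientAt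
  let A : EuclideanSpace ℝ (Fin n) × EuclideanSpace ℝ (Fin m) → EuclideanSpace ℝ (Fin n) :=
    fun w => -gradient (fun x' => L (x', w.2)) w.1
  let B : EuclideanSpace ℝ (Fin n) × EuclideanSpace ℝ (Fin m) → EuclideanSpace ℝ (Fin m) :=
    fun w => gradient (fun y' => L (w.1, y')) w.2
  have hAc : Continuous A := by
    have : A = fun w => -(InnerProductSpace.toDual ℝ _).symm
        ((fderiv ℝ L w).comp (ContinuousLinearMap.inl ℝ _ _)) := by
      funext w
      simp only [A, gradient]
      rw [(hd1 w.1 w.2).fderiv]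
    rw [this]
    exact ((LinearIsometryEquiv.continuous _).comp (hdc.clm_comp continuous_const)).neg
  have hBc : Continuous B := by
    have : B = fun w => (InnerProductSpace.toDual ℝ _).symm
        ((fderiv ℝ L w).comp (ContinuousLinearMap.inr ℝ _ _)) := by
      funext w
      simp only [B, gradient]
      rw [(hd2 w.1 w.2).fderiv]
    rw [this]
    exact (LinearIsometryEquiv.continuous _).comp (hdc.clm_comp continuous_const)
  have hA : ∀ x y p', L (x, y) - inner ℝ (A (x, y)) (p' - x) ≤ L (p', y) := by
    intro a b p'
    have := gda_first_order _ (hconv b) _ a p' (hg1 a b)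
    simp only [A, inner_neg_left]
    linarith
  have hB : ∀ x y q', L (x, q') ≤ L (x, y) + inner ℝ (B (x, y)) (q' - y) := by
    intro a b q'
    have hneg : HasGradientAt (fun y' => -L (a, y')) (-B (a, b)) b := by
      rw [hasGradientAt_iff_hasFDerivAt, map_neg]
      exact (hg2 a b).hasFDerivAt.neg
    have := gda_first_order _ (hconc a).neg _ b q' hneg
    simp only [inner_neg_left, Pi.neg_apply] at this
    linarith
  obtain ⟨p, q, hs⟩ := hsol
  rcases hstrict p q with h | h
  · refine gda_core L hLc A B hAc hBc hA hB p q hs ?_ x y hx hy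
    intro a ha
    refine h.eq_of_isMinOn (fun u _ => ?_) (fun u _ => (hs u q).2) (Set.mem_univ _)
      (Set.mem_univ _)
    change L (a, q) ≤ L (u, q)
    rw [ha]; exact (hs u q).2
  · obtain ⟨q', p', h1, h2⟩ := gda_core (fun w => -L w.swap) (by fun_prop)
      (fun w => B w.swap) (fun w => A w.swap) (by fun_prop) (by fun_prop)
      (fun b a q' => by have := hB a b q'; simp only [Prod.swap_prod_mk]; linarith)
      (fun b a p' => by have := hA a b p'; simp only [Prod.swap_prod_mk]; linarith)
      q p (fun b a => by have := hs a b; simp only [Prod.swap_prod_mk]; constructor <;> linarith)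
      (fun b hb => by
        simp only [Prod.swap_prod_mk, neg_inj] at hb
        refine h.eq_of_isMaxOn (fun u _ => ?_) (fun u _ => (hs p u).1) (Set.mem_univ _)
          (Set.mem_univ _)
        change L (p, u) ≤ L (p, b)
        rw [hb]; exact (hs p u).1)
      y x hy hx
    refine ⟨p', q', fun a b => ?_, (continuous_swap.tendsto _).comp h2⟩
    have := h1 b a
    simp only [Prod.swap_prod_mk] at this
    constructor <;> linarith
end

section
/- Let L : ℝ^n × ℝ^m → ℝ be a C² convex-concave function that has at least one equilibrium (a point where ∇L = 0) and whose Hessian ∇²L is invertible at every equilibrium (so that the equilibrium (x*, y*) is unique). For λ > 0 define L'_λ(x,y) = L(x,y) + (λ/2)‖x‖² − (λ/2)‖y‖². Then for every ε > 0 there exists λ₀ > 0 such that for all λ ∈ (0, λ₀), L'_λ has an equilibrium (a point where ∇L'_λ = 0) lying within distance ε of (x*, y*). -/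
/-- The regularized utility `L'_λ(x,y) = L(x,y) + (λ/2)‖x‖² − (λ/2)‖y‖²`. -/
noncomputable def Lreg {n m : ℕ}
    (L : EuclideanSpace ℝ (Fin n) × EuclideanSpace ℝ (Fin m) → ℝ) (lam : ℝ)
    (z : EuclideanSpace ℝ (Fin n) × EuclideanSpace ℝ (Fin m)) : ℝ :=
  L z + lam / 2 * ‖z.1‖ ^ 2 - lam / 2 * ‖z.2‖ ^ 2

/-- **Small regularization perturbs the equilibrium only slightly:** if the `C²`
convex-concave `L` has an equilibrium and invertible Hessian at every equilibrium, then
for every `ε > 0` and all small enough `λ > 0` the regularized utility `L'_λ` has an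
equilibrium within distance `ε` of the (unique) equilibrium of `L`. -/
theorem regularization_perturbs_equilibrium
    {n m : ℕ} (L : EuclideanSpace ℝ (Fin n) × EuclideanSpace ℝ (Fin m) → ℝ)
    (hL : ContDiff ℝ 2 L)
    (hconv : ∀ y, ConvexOn ℝ Set.univ fun x => L (x, y))
    (hconc : ∀ x, ConcaveOn ℝ Set.univ fun y => L (x, y))
    (xstar : EuclideanSpace ℝ (Fin n)) (ystar : EuclideanSpace ℝ (Fin m))
    (heq : fderiv ℝ L (xstar, ystar) = 0)
    (hhess : ∀ z, fderiv ℝ L z = 0 → Function.Bijective (fderiv ℝ (fderiv ℝ L) z)) :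
    ∀ ε > 0, ∃ lam₀ > 0, ∀ lam ∈ Set.Ioo (0:ℝ) lam₀,
      ∃ z, fderiv ℝ (Lreg L lam) z = 0 ∧ dist z (xstar, ystar) ≤ ε := by
  intro ε hε
  set R : EuclideanSpace ℝ (Fin n) × EuclideanSpace ℝ (Fin m) → ℝ :=
    fun z => 1 / 2 * ‖z.1‖ ^ 2 - 1 / 2 * ‖z.2‖ ^ 2 with hR
  have hRc : ContDiff ℝ 2 R := by
    have h1 : ContDiff ℝ 2 (fun z : EuclideanSpace ℝ (Fin n) × EuclideanSpace ℝ (Fin m) =>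
      ‖z.1‖ ^ 2) := contDiff_fst.norm_sq ℝ
    have h2 : ContDiff ℝ 2 (fun z : EuclideanSpace ℝ (Fin n) × EuclideanSpace ℝ (Fin m) =>
      ‖z.2‖ ^ 2) := contDiff_snd.norm_sq ℝ
    exact (contDiff_const.mul h1).sub (contDiff_const.mul h2)
  have hLreg : ∀ lam z, fderiv ℝ (Lreg L lam) z = fderiv ℝ L z + lam • fderiv ℝ R z := by
    intro lam z
    have e : Lreg L lam = fun z => L z + lam • R z := by
      funext z
      simp only [Lreg, hR, smul_eq_mul]
      ring
    rw [e]
    have hl := (hL.differentiable (by norm_num) z).hasFDerivAt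
    have hr := (hRc.differentiable (by norm_num) z).hasFDerivAt
    exact (hl.add (hr.const_smul lam)).fderiv
  have hL1 : ContDiff ℝ 1 (fderiv ℝ L) := hL.fderiv_right (by norm_num)
  have hR1 : ContDiff ℝ 1 (fderiv ℝ R) := hRc.fderiv_right (by norm_num)
  set z0 : EuclideanSpace ℝ (Fin n) × EuclideanSpace ℝ (Fin m) := (xstar, ystar) with hz0
  have hs1 := (hL1.contDiffAt (x := z0)).hasStrictFDerivAt (by norm_num)
  have hs2 := (hR1.contDiffAt (x := z0)).hasStrictFDerivAt (by norm_num)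
  have hf : HasStrictFDerivAt
      (Prod.fst : (EuclideanSpace ℝ (Fin n) × EuclideanSpace ℝ (Fin m)) × ℝ → _)
      (ContinuousLinearMap.fst ℝ _ ℝ) (z0, (0 : ℝ)) := hasStrictFDerivAt_fst
  have hsn : HasStrictFDerivAt
      (Prod.snd : (EuclideanSpace ℝ (Fin n) × EuclideanSpace ℝ (Fin m)) × ℝ → ℝ)
      (ContinuousLinearMap.snd ℝ _ ℝ) (z0, (0 : ℝ)) := hasStrictFDerivAt_snd
  have a1 := HasStrictFDerivAt.comp (g := fderiv ℝ L) (z0, (0 : ℝ)) hs1 hf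
  have a2 := HasStrictFDerivAt.comp (g := fderiv ℝ R) (z0, (0 : ℝ)) hs2 hf
  have hF := (a1.add (hsn.smul a2)).prodMk hsn
  have hmap := hF.map_nhds_eq_of_surj (by
    rw [LinearMap.range_eq_top]
    rintro ⟨v, t⟩
    obtain ⟨w, hw⟩ := (hhess z0 heq).2 (v - t • fderiv ℝ R z0)
    refine ⟨(w, t), ?_⟩
    simp [hw])
  have hball : Metric.ball z0 ε ×ˢ (Set.univ : Set ℝ) ∈ nhds (z0, (0 : ℝ)) :=
    prod_mem_nhds (Metric.ball_mem_nhds _ hε) Filter.univ_mem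
  have himg := Filter.image_mem_map (m := fun p : (EuclideanSpace ℝ (Fin n) ×
    EuclideanSpace ℝ (Fin m)) × ℝ => (fderiv ℝ L p.1 + p.2 • fderiv ℝ R p.1, p.2)) hball
  have himg2 := hmap.ge himg
  have hv : (fderiv ℝ L z0 + (0 : ℝ) • fderiv ℝ R z0, (0 : ℝ)) = (0, (0 : ℝ)) := by
    simp [heq]
  change _ ∈ nhds (fderiv ℝ L z0 + (0 : ℝ) • fderiv ℝ R z0, (0 : ℝ)) at himg2
  rw [hv] at himg2
  have himg3 := himg2
  have hc : Filter.Tendsto (fun t : ℝ =>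
      ((0 : EuclideanSpace ℝ (Fin n) × EuclideanSpace ℝ (Fin m) →L[ℝ] ℝ), t))
      (nhds 0) (nhds (0, 0)) :=
    (Continuous.prodMk_right _).tendsto _
  obtain ⟨δ, hδ, hsub⟩ := Metric.mem_nhds_iff.1 (hc himg3)
  refine ⟨δ, hδ, fun lam hlam => ?_⟩
  have hm : lam ∈ Metric.ball (0 : ℝ) δ := by
    simp [Real.norm_eq_abs, abs_of_pos hlam.1, hlam.2]
  obtain ⟨⟨z, t⟩, hz, hzt⟩ := hsub hm
  simp only [Prod.mk.injEq] at hzt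
  obtain ⟨h1, rfl⟩ := hzt
  exact ⟨z, by rw [hLreg]; exact h1, (Metric.mem_ball.1 hz.1).le⟩
end

section
/- Let f : ℝ^N → ℝ and g : ℝ^M → ℝ be C² functions and let p, q ∈ ℝ. Consider the modified Hamiltonian gradient descent dynamics θ̇(t) = −∇f(θ(t))·‖∇g(φ(t))‖²·(f(θ(t)) − p), φ̇(t) = −∇g(φ(t))·‖∇f(θ(t))‖²·(g(φ(t)) − q) for the hidden bilinear objective L(θ,φ) = (f(θ) − p)(g(φ) − q). Let (θ(t),φ(t)) be a C¹ solution defined for all t ≥ 0 whose initialization is safe for (p,q): ∇f(θ(0)) ≠ 0, ∇g(φ(0)) ≠ 0, p lies in the image of t ↦ f(γ(t)) where γ solves γ̇ = ∇f(γ), γ(0) = θ(0), and q lies in the image of g along the gradient ascent flow of g started at φ(0). Then (f(θ(t)), g(φ(t))) → (p,q) as t → ∞. -/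
open Set Filter Topology

/-- Antiderivative of a function continuous on `[0,∞)`. -/
lemma aux_prim (k : ℝ → ℝ) (hk : ContinuousOn k (Ici 0)) :
    ∃ K : ℝ → ℝ, K 0 = 0 ∧ ∀ t, 0 ≤ t → HasDerivAt K (k t) t := by
  have hc : Continuous (fun t : ℝ => k (max t 0)) :=
    hk.comp_continuous (by fun_prop) (fun t => le_max_right t 0)
  refine ⟨fun t => ∫ x in (0:ℝ)..t, k (max x 0), by simp, fun t ht => ?_⟩
  have h := (hc.integral_hasStrictDerivAt 0 t).hasDerivAt
  simpa [max_eq_left ht] using h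

/-- Uniqueness for the non-autonomous rescaling of a `C¹` vector field. -/
lemma aux_unique {E : Type*} [NormedAddCommGroup E] [NormedSpace ℝ E] (v : E → E)
    (hv : ContDiff ℝ 1 v) (c : ℝ → ℝ) (T : ℝ) (hT : 0 ≤ T) (hc : ContinuousOn c (Icc 0 T))
    (x y : ℝ → E)
    (hx : ∀ t ∈ Icc 0 T, HasDerivAt x (c t • v (x t)) t)
    (hy : ∀ t ∈ Icc 0 T, HasDerivAt y (c t • v (y t)) t) (h0 : x 0 = y 0) : x T = y T := by
  have hxc : ContinuousOn x (Icc 0 T) := HasDerivAt.continuousOn hx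
  have hyc : ContinuousOn y (Icc 0 T) := HasDerivAt.continuousOn hy
  have hS : IsCompact (image x (Icc 0 T) ∪ image y (Icc 0 T)) :=
    (isCompact_Icc.image_of_continuousOn hxc).union (isCompact_Icc.image_of_continuousOn hyc)
  obtain ⟨K, hK⟩ := LocallyLipschitzOn.exists_lipschitzOnWith_of_compact hS
    hv.locallyLipschitz.locallyLipschitzOn
  obtain ⟨C, hC⟩ := isCompact_Icc.exists_bound_of_continuousOn hc
  have hlip : ∀ t ∈ Ico 0 T, LipschitzOnWith (C.toNNReal * K) (fun z => c t • v z)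
      (image x (Icc 0 T) ∪ image y (Icc 0 T)) := by
    intro t ht
    refine LipschitzOnWith.of_dist_le_mul fun a ha b hb => ?_
    have h1 := hK.dist_le_mul a ha b hb
    have h2 := hC t (Ico_subset_Icc_self ht)
    rw [dist_smul₀, NNReal.coe_mul, mul_assoc]
    exact mul_le_mul (h2.trans (Real.le_coe_toNNReal C)) h1 dist_nonneg (by positivity)
  exact ODE_solution_unique_of_mem_Icc_right (v := fun t z => c t • v z)
    (s := fun _ => image x (Icc 0 T) ∪ image y (Icc 0 T)) hlip hxc
    (fun t ht => (hx t (Ico_subset_Icc_self ht)).hasDerivWithinAt)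
    (fun t ht => Or.inl (mem_image_of_mem _ (Ico_subset_Icc_self ht))) hyc
    (fun t ht => (hy t (Ico_subset_Icc_self ht)).hasDerivWithinAt)
    (fun t ht => Or.inr (mem_image_of_mem _ (Ico_subset_Icc_self ht))) h0
    (right_mem_Icc.2 hT)

lemma aux_nonneg (e d : ℝ → ℝ) (he : ∀ t, 0 ≤ t → HasDerivAt e (d t) t)
    (hd : ∀ t, 0 ≤ t → 0 ≤ d t) (t : ℝ) (ht : 0 ≤ t) : e 0 ≤ e t := by
  refine monotoneOn_of_deriv_nonneg (convex_Ici (0:ℝ)) (HasDerivAt.continuousOn he)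
    ?_ ?_ self_mem_Ici ht ht
  · intro x hx
    rw [interior_Ici] at hx
    exact (he x (le_of_lt hx)).differentiableAt.differentiableWithinAt
  · intro x hx
    rw [interior_Ici] at hx
    rw [(he x (le_of_lt hx)).deriv]
    exact hd x (le_of_lt hx)

/-- Scalar linear equation `e' = -k e`, with `k ≥ c`. -/
lemma aux_scalar (e k : ℝ → ℝ) (hk : ContinuousOn k (Ici 0))
    (he : ∀ t, 0 ≤ t → HasDerivAt e (-(k t * e t)) t) (c : ℝ) (hc : ∀ t, 0 ≤ t → c ≤ k t) :
    ∀ t, 0 ≤ t → ∃ r, 0 ≤ r ∧ r ≤ Real.exp (-(c * t)) ∧ e t = e 0 * r := by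
  intro t ht
  obtain ⟨K, hK0, hK⟩ := aux_prim k hk
  have hle : c * t ≤ K t := by
    have := aux_nonneg (fun t => K t - c * t) (fun t => k t - c)
      (fun s hs => by simpa using (hK s hs).fun_sub ((hasDerivAt_id s).const_mul c))
      (fun s hs => sub_nonneg.2 (hc s hs)) t ht
    simp [hK0] at this
    exact this
  have hcon : e t * Real.exp (K t) = e 0 := by
    have hd : ∀ s, 0 ≤ s → HasDerivAt (fun s => e s * Real.exp (K s)) 0 s := by
      intro s hs
      exact ((he s hs).fun_mul (hK s hs).exp).congr_deriv (by ring)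
    have := constant_of_has_deriv_right_zero (a := 0) (b := t)
      (HasDerivAt.continuousOn fun s hs => hd s hs.1)
      (fun s hs => (hd s hs.1).hasDerivWithinAt) t (right_mem_Icc.2 ht)
    simpa [hK0] using this
  refine ⟨Real.exp (-(K t)), (Real.exp_pos _).le, Real.exp_le_exp.2 (by linarith), ?_⟩
  rw [← hcon, mul_assoc, ← Real.exp_add]
  simp

lemma aux_grad_contDiff {N : ℕ} (f : EuclideanSpace ℝ (Fin N) → ℝ) (hf : ContDiff ℝ 2 f) :
    ContDiff ℝ 1 (gradient f) := by
  have h : ContDiff ℝ 1 (fderiv ℝ f) := hf.fderiv_right (by norm_num)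
  exact (InnerProductSpace.toDual ℝ (EuclideanSpace ℝ (Fin N))).symm.contDiff.comp h

lemma aux_chain {N : ℕ} (f : EuclideanSpace ℝ (Fin N) → ℝ) (hf : ContDiff ℝ 2 f)
    (x : ℝ → EuclideanSpace ℝ (Fin N)) (c t : ℝ) (hx : HasDerivAt x (c • gradient f (x t)) t) :
    HasDerivAt (fun t => f (x t)) (c * ‖gradient f (x t)‖ ^ 2) t := by
  have h1 : HasGradientAt f (gradient f (x t)) (x t) :=
    ((hf.differentiable (by norm_num)) (x t)).hasGradientAt
  have h2 := (hasGradientAt_iff_hasFDerivAt.1 h1).comp_hasDerivAt t hx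
  refine h2.congr_deriv ?_
  rw [InnerProductSpace.toDual_apply_apply, inner_smul_right, real_inner_self_eq_norm_sq]

/-- `e = f(θ) - p` satisfies a linear equation. -/
lemma aux_e {N : ℕ} (f : EuclideanSpace ℝ (Fin N) → ℝ) (hf : ContDiff ℝ 2 f) (p : ℝ)
    (θ : ℝ → EuclideanSpace ℝ (Fin N)) (a : ℝ → ℝ)
    (hθ : ∀ t : ℝ, 0 ≤ t → HasDerivAt θ (-((a t * (f (θ t) - p)) • gradient f (θ t))) t) :
    ∀ t, 0 ≤ t → HasDerivAt (fun t => f (θ t) - p)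
      (-((a t * ‖gradient f (θ t)‖ ^ 2) * (f (θ t) - p))) t := by
  intro t ht
  have h := hθ t ht
  rw [← neg_smul] at h
  have h2 := (aux_chain f hf θ _ t h).sub_const p
  exact h2.congr_deriv (by ring)

lemma aux_kcont {N : ℕ} (f : EuclideanSpace ℝ (Fin N) → ℝ) (hf : ContDiff ℝ 2 f)
    (θ d : ℝ → EuclideanSpace ℝ (Fin N)) (hθ : ∀ t : ℝ, 0 ≤ t → HasDerivAt θ (d t) t) :
    ContinuousOn (fun t => ‖gradient f (θ t)‖ ^ 2) (Ici 0) := by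
  have h : ContinuousOn θ (Ici 0) := HasDerivAt.continuousOn hθ
  exact (((aux_grad_contDiff f hf).continuous.comp_continuousOn h).norm).pow 2

/-- The safe initialization bounds the gradient below along the trajectory. -/
lemma aux_lower {N : ℕ} (f : EuclideanSpace ℝ (Fin N) → ℝ) (hf : ContDiff ℝ 2 f) (p : ℝ)
    (θ : ℝ → EuclideanSpace ℝ (Fin N)) (a : ℝ → ℝ) (ha : ContinuousOn a (Ici 0))
    (ha0 : ∀ t, 0 ≤ t → 0 ≤ a t)
    (hθ : ∀ t : ℝ, 0 ≤ t → HasDerivAt θ (-((a t * (f (θ t) - p)) • gradient f (θ t))) t)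
    (hsafef : gradient f (θ 0) ≠ 0 ∧
      ∃ γ : ℝ → EuclideanSpace ℝ (Fin N), γ 0 = θ 0 ∧
        (∀ t, HasDerivAt γ (gradient f (γ t)) t) ∧ ∃ t, f (γ t) = p) :
    ∃ c, 0 < c ∧ ∀ t, 0 ≤ t → c ≤ ‖gradient f (θ t)‖ ^ 2 := by
  obtain ⟨hne, γ, hγ0, hγ, T, hT⟩ := hsafef
  have hv := aux_grad_contDiff f hf
  have hγne : ∀ s, gradient f (γ s) ≠ 0 := by
    intro s hs
    have hx : ∀ t : ℝ, HasDerivAt (fun t => γ (s - s * t))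
        ((-s) • gradient f (γ (s - s * t))) t := by
      intro t
      have h1 : HasDerivAt (fun t : ℝ => s - s * t) (-s) t := by
        simpa using ((hasDerivAt_id t).const_mul s).const_sub s
      exact HasDerivAt.scomp t (hγ (s - s * t)) h1
    have := aux_unique (gradient f) hv (fun _ => -s) 1 zero_le_one continuousOn_const
      (fun t => γ (s - s * t)) (fun _ => γ s) (fun t _ => hx t)
      (fun t _ => by simpa [hs] using hasDerivAt_const t (γ s)) (by simp)
    simp at this
    rw [← hγ0, this] at hne
    exact hne hs
  have hmono : StrictMono (fun s => f (γ s)) := by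
    refine strictMono_of_hasDerivAt_pos (f' := fun s => ‖gradient f (γ s)‖ ^ 2) (fun s => ?_)
      (fun s => by have := norm_pos_iff.2 (hγne s); positivity)
    have := aux_chain f hf γ 1 s (by simpa using hγ s)
    simpa using this
  have hθc : ContinuousOn θ (Ici 0) := HasDerivAt.continuousOn hθ
  have hcc : ContinuousOn (fun t => -(a t * (f (θ t) - p))) (Ici 0) :=
    (ha.mul ((hf.continuous.comp_continuousOn hθc).sub continuousOn_const)).neg
  obtain ⟨s, hs0, hs⟩ := aux_prim _ hcc
  have heq : ∀ t, 0 ≤ t → θ t = γ (s t) := by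
    intro t ht
    refine aux_unique (gradient f) hv (fun t => -(a t * (f (θ t) - p))) t ht
      (hcc.mono Icc_subset_Ici_self) θ (fun t => γ (s t)) ?_ ?_ (by simp [hs0, hγ0])
    · intro r hr
      have := hθ r hr.1
      rwa [← neg_smul] at this
    · intro r hr
      exact HasDerivAt.scomp r (hγ (s r)) (hs r hr.1)
  have hmem : ∀ t, 0 ≤ t → s t ∈ uIcc 0 T := by
    intro t ht
    obtain ⟨r, hr0, hr1, hr⟩ := aux_scalar _ _
      (ha.mul (aux_kcont f hf θ _ hθ)) (aux_e f hf p θ a hθ) 0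
      (fun t ht => mul_nonneg (ha0 t ht) (by positivity)) t ht
    simp only [zero_mul, neg_zero, Real.exp_zero] at hr1
    rw [heq t ht, ← hγ0, ← hT] at hr
    rcases le_total 0 T with h | h
    · rw [uIcc_of_le h]
      have h3 := hmono.monotone h
      beta_reduce at h3
      constructor
      · rw [← hmono.le_iff_le]; nlinarith
      · rw [← hmono.le_iff_le]; nlinarith
    · rw [uIcc_of_ge h]
      have h3 := hmono.monotone h
      beta_reduce at h3
      constructor
      · rw [← hmono.le_iff_le]; nlinarith
      · rw [← hmono.le_iff_le]; nlinarith
  have hγc : Continuous γ := continuous_iff_continuousAt.2 fun t => (hγ t).continuousAt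
  obtain ⟨m, -, hm⟩ := (isCompact_uIcc (a := (0:ℝ)) (b := T)).exists_isMinOn nonempty_uIcc
    (f := fun s => ‖gradient f (γ s)‖ ^ 2) (((hv.continuous.comp hγc).norm.pow 2).continuousOn)
  refine ⟨‖gradient f (γ m)‖ ^ 2, by have := norm_pos_iff.2 (hγne m); positivity, ?_⟩
  intro t ht
  rw [heq t ht]
  exact hm (hmem t ht)

lemma aux_tendsto {N : ℕ} (f : EuclideanSpace ℝ (Fin N) → ℝ) (hf : ContDiff ℝ 2 f) (p : ℝ)
    (θ : ℝ → EuclideanSpace ℝ (Fin N)) (a : ℝ → ℝ) (ha : ContinuousOn a (Ici 0))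
    (hθ : ∀ t : ℝ, 0 ≤ t → HasDerivAt θ (-((a t * (f (θ t) - p)) • gradient f (θ t))) t)
    (c₁ c₂ : ℝ) (hc₁ : 0 < c₁) (hc₂ : 0 < c₂) (h₁ : ∀ t, 0 ≤ t → c₁ ≤ a t)
    (h₂ : ∀ t, 0 ≤ t → c₂ ≤ ‖gradient f (θ t)‖ ^ 2) :
    Tendsto (fun t => f (θ t)) atTop (𝓝 p) := by
  have hs := aux_scalar _ _ (ha.mul (aux_kcont f hf θ _ hθ)) (aux_e f hf p θ a hθ) (c₁ * c₂)
    (fun t ht => mul_le_mul (h₁ t ht) (h₂ t ht) hc₂.le (hc₁.le.trans (h₁ t ht)))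
  rw [← tendsto_sub_nhds_zero_iff]
  have hlim : Tendsto (fun t : ℝ => |f (θ 0) - p| * Real.exp (-(c₁ * c₂ * t))) atTop (𝓝 0) := by
    have h : Tendsto (fun t : ℝ => c₁ * c₂ * t) atTop atTop :=
      tendsto_id.const_mul_atTop (mul_pos hc₁ hc₂)
    simpa using (Real.tendsto_exp_neg_atTop_nhds_zero.comp h).const_mul |f (θ 0) - p|
  refine squeeze_zero_norm' ?_ hlim
  filter_upwards [eventually_ge_atTop 0] with t ht
  obtain ⟨r, hr0, hr1, hr⟩ := hs t ht
  rw [hr, Real.norm_eq_abs, abs_mul, abs_of_nonneg hr0]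
  gcongr


/-- **Convergence of modified Hamiltonian gradient descent in hidden bilinear games:**
for the objective `L(θ,φ) = (f(θ) − p)(g(φ) − q)`, along any safe trajectory of the
dynamics `θ̇ = −∇f(θ)·‖∇g(φ)‖²·(f(θ) − p)`, `φ̇ = −∇g(φ)·‖∇f(θ)‖²·(g(φ) − q)`,
the outputs `(f(θ(t)), g(φ(t)))` converge to `(p, q)`. -/
theorem hamiltonian_hidden_bilinear_convergence
    {N M : ℕ} (f : EuclideanSpace ℝ (Fin N) → ℝ) (g : EuclideanSpace ℝ (Fin M) → ℝ)
    (hf : ContDiff ℝ 2 f) (hg : ContDiff ℝ 2 g) (p q : ℝ)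
    (θ : ℝ → EuclideanSpace ℝ (Fin N)) (φ : ℝ → EuclideanSpace ℝ (Fin M))
    (hθ : ∀ t : ℝ, 0 ≤ t → HasDerivAt θ
      (-((‖gradient g (φ t)‖ ^ 2 * (f (θ t) - p)) • gradient f (θ t))) t)
    (hφ : ∀ t : ℝ, 0 ≤ t → HasDerivAt φ
      (-((‖gradient f (θ t)‖ ^ 2 * (g (φ t) - q)) • gradient g (φ t))) t)
    (hsafef : gradient f (θ 0) ≠ 0 ∧
      ∃ γ : ℝ → EuclideanSpace ℝ (Fin N), γ 0 = θ 0 ∧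
        (∀ t, HasDerivAt γ (gradient f (γ t)) t) ∧ ∃ t, f (γ t) = p)
    (hsafeg : gradient g (φ 0) ≠ 0 ∧
      ∃ γ : ℝ → EuclideanSpace ℝ (Fin M), γ 0 = φ 0 ∧
        (∀ t, HasDerivAt γ (gradient g (γ t)) t) ∧ ∃ t, g (γ t) = q) :
    Filter.Tendsto (fun t => (f (θ t), g (φ t))) Filter.atTop (nhds (p, q)) := by
  have haf := aux_kcont f hf θ _ hθ
  have hag := aux_kcont g hg φ _ hφ
  obtain ⟨c₁, hc₁, h₁⟩ := aux_lower f hf p θ _ hag (fun t _ => by positivity) hθ hsafef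
  obtain ⟨c₂, hc₂, h₂⟩ := aux_lower g hg q φ _ haf (fun t _ => by positivity) hφ hsafeg
  exact (aux_tendsto f hf p θ _ hag hθ c₂ c₁ hc₂ hc₁ h₂ h₁).prodMk_nhds
    (aux_tendsto g hg q φ _ haf hφ c₁ c₂ hc₁ hc₂ h₁ h₂)
end

section
/- Let N be a nonempty finite set and let p_data, p_G : N → ℝ satisfy p_data(x) > 0 and p_G(x) > 0 for all x ∈ N. Define, for D : N → (0,1), V(D) = Σ_{x∈N} p_data(x)·log(D(x)) + Σ_{x∈N} p_G(x)·log(1 − D(x)), and let D*(x) = p_data(x)/(p_data(x) + p_G(x)). Then D* takes values in (0,1), and for every D : N → (0,1), V(D) ≤ V(D*), with equality if and only if D = D*. -/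
open Finset

theorem gan_pointwise_lt (a b d : ℝ) (ha : 0 < a) (hb : 0 < b) (h0 : 0 < d) (h1 : d < 1)
    (hne : d ≠ a / (a + b)) :
    a * Real.log d + b * Real.log (1 - d) <
      a * Real.log (a / (a + b)) + b * Real.log (1 - a / (a + b)) := by
  have hab : 0 < a + b := by positivity
  have e : 1 - a / (a + b) = b / (a + b) := by field_simp; ring
  rw [e]
  have hs : 0 < a / (a + b) := by positivity
  have ht : 0 < b / (a + b) := by positivity
  have hd : 0 < 1 - d := by linarith
  have k1 := Real.log_lt_sub_one_of_pos (div_pos h0 hs) (by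
    intro h; exact hne ((div_eq_one_iff_eq hs.ne').mp h))
  have k2 := Real.log_le_sub_one_of_pos (div_pos hd ht)
  rw [Real.log_div h0.ne' hs.ne'] at k1
  rw [Real.log_div hd.ne' ht.ne'] at k2
  have m1 := mul_lt_mul_of_pos_left k1 ha
  have m2 := mul_le_mul_of_nonneg_left k2 hb.le
  have r1 : a * (d / (a / (a + b)) - 1) = d * (a + b) - a := by field_simp
  have r2 : b * ((1 - d) / (b / (a + b)) - 1) = (1 - d) * (a + b) - b := by field_simp
  rw [r1] at m1
  rw [r2] at m2
  linarith

/-- **Optimal discriminator for the vanilla GAN:** the discriminator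
`D*(x) = p_data(x)/(p_data(x) + p_G(x))` takes values in `(0,1)` and is the unique
maximizer of the GAN utility `V` among discriminators valued in `(0,1)`. -/
theorem vanilla_gan_optimal_discriminator
    {N : Type*} [Fintype N] [Nonempty N]
    (pdata pG : N → ℝ) (hpdata : ∀ x, 0 < pdata x) (hpG : ∀ x, 0 < pG x) :
    (∀ x, pdata x / (pdata x + pG x) ∈ Set.Ioo (0:ℝ) 1) ∧
    ∀ D : N → ℝ, (∀ x, D x ∈ Set.Ioo (0:ℝ) 1) →
      (∑ x, pdata x * Real.log (D x) + ∑ x, pG x * Real.log (1 - D x) ≤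
        ∑ x, pdata x * Real.log (pdata x / (pdata x + pG x)) +
          ∑ x, pG x * Real.log (1 - pdata x / (pdata x + pG x))) ∧
      ((∑ x, pdata x * Real.log (D x) + ∑ x, pG x * Real.log (1 - D x) =
        ∑ x, pdata x * Real.log (pdata x / (pdata x + pG x)) +
          ∑ x, pG x * Real.log (1 - pdata x / (pdata x + pG x))) ↔
        D = fun x => pdata x / (pdata x + pG x)) := by
  refine ⟨fun x => ?_, fun D hD => ?_⟩
  · have h1 := hpdata x
    have h2 := hpG x
    exact ⟨by positivity, by rw [div_lt_one (by positivity)]; linarith⟩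
  · simp only [← Finset.sum_add_distrib]
    have hle : ∀ x ∈ (Finset.univ : Finset N),
        pdata x * Real.log (D x) + pG x * Real.log (1 - D x) ≤
        pdata x * Real.log (pdata x / (pdata x + pG x)) +
          pG x * Real.log (1 - pdata x / (pdata x + pG x)) := by
      intro x _
      by_cases h : D x = pdata x / (pdata x + pG x)
      · rw [h]
      · exact (gan_pointwise_lt _ _ _ (hpdata x) (hpG x) (hD x).1 (hD x).2 h).le
    refine ⟨Finset.sum_le_sum hle, ?_⟩
    rw [Finset.sum_eq_sum_iff_of_le hle]
    constructor
    · intro h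
      funext x
      by_contra hne
      exact (gan_pointwise_lt _ _ _ (hpdata x) (hpG x) (hD x).1 (hD x).2 hne).ne
        (h x (Finset.mem_univ x))
    · intro h x _
      rw [h]
end

section
/- Let N be a nonempty finite set and let p_data, p_G : N → ℝ be probability distributions on N with p_data(x) > 0 and p_G(x) > 0 for all x. Then Σ_{x∈N} p_data(x)·log( p_data(x)/(p_data(x)+p_G(x)) ) + Σ_{x∈N} p_G(x)·log( p_G(x)/(p_data(x)+p_G(x)) ) = −log 4 + 2·JSD(p_data‖p_G), where JSD(p‖q) = (1/2)·Σ_{x∈N} p(x)·log( 2p(x)/(p(x)+q(x)) ) + (1/2)·Σ_{x∈N} q(x)·log( 2q(x)/(p(x)+q(x)) ). Consequently, the value of the vanilla GAN utility at the best-response discriminator D*_G(x) = p_data(x)/(p_data(x)+p_G(x)) equals −log 4 + 2·JSD(p_data‖p_G). -/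
open Finset

/-- The Jensen–Shannon divergence between two distributions on a finite set. -/
noncomputable def JSD {N : Type*} [Fintype N] (p q : N → ℝ) : ℝ :=
  1 / 2 * ∑ x, p x * Real.log (2 * p x / (p x + q x)) +
    1 / 2 * ∑ x, q x * Real.log (2 * q x / (p x + q x))

/-- **The vanilla GAN utility at the best-response discriminator equals
`−log 4 + 2·JSD(p_data‖p_G)`.** -/
theorem vanilla_gan_value_eq_jsd
    {N : Type*} [Fintype N] [Nonempty N]
    (pdata pG : N → ℝ) (hpdata : ∀ x, 0 < pdata x) (hpG : ∀ x, 0 < pG x)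
    (hsum1 : ∑ x, pdata x = 1) (hsum2 : ∑ x, pG x = 1) :
    (∑ x, pdata x * Real.log (pdata x / (pdata x + pG x)) +
        ∑ x, pG x * Real.log (pG x / (pdata x + pG x)) =
      -Real.log 4 + 2 * JSD pdata pG) ∧
    (∑ x, pdata x * Real.log (pdata x / (pdata x + pG x)) +
        ∑ x, pG x * Real.log (1 - pdata x / (pdata x + pG x)) =
      -Real.log 4 + 2 * JSD pdata pG) := by
  have key : ∀ r : N → ℝ, (∀ x, 0 < r x) → ∑ x, r x = 1 →
      ∑ x, r x * Real.log (2 * r x / (pdata x + pG x)) =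
        Real.log 2 + ∑ x, r x * Real.log (r x / (pdata x + pG x)) := by
    intro r hr hs
    have h : ∀ x, r x * Real.log (2 * r x / (pdata x + pG x)) =
        r x * Real.log 2 + r x * Real.log (r x / (pdata x + pG x)) := by
      intro x
      have h1 := hr x
      have h2 : 0 < pdata x + pG x := add_pos (hpdata x) (hpG x)
      rw [mul_div_assoc, Real.log_mul two_ne_zero (div_pos h1 h2).ne', mul_add]
    rw [Finset.sum_congr rfl (fun x _ => h x), Finset.sum_add_distrib, ← Finset.sum_mul, hs,
      one_mul]
  have h4 : Real.log 4 = 2 * Real.log 2 := by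
    rw [show (4 : ℝ) = 2 ^ 2 by norm_num, Real.log_pow]
    norm_num
  have main : ∑ x, pdata x * Real.log (pdata x / (pdata x + pG x)) +
        ∑ x, pG x * Real.log (pG x / (pdata x + pG x)) =
      -Real.log 4 + 2 * JSD pdata pG := by
    unfold JSD
    rw [key pdata hpdata hsum1, key pG hpG hsum2, h4]
    ring
  refine ⟨main, ?_⟩
  rw [← main]
  congr 1
  refine Finset.sum_congr rfl (fun x _ => ?_)
  have h2 : pdata x + pG x ≠ 0 := (add_pos (hpdata x) (hpG x)).ne'
  rw [one_sub_div h2, add_sub_cancel_left]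
end

section
/- Let N be a nonempty finite set and let p_data : N → ℝ be a probability distribution on N. For D : N → (0,1) and a probability distribution p_G on N define V(p_G, D) = Σ_{x∈N} p_data(x)·log(D(x)) + Σ_{x∈N} p_G(x)·log(1 − D(x)). Then: (i) for every D : N → (0,1) there exists a probability distribution p_G on N with V(p_G, D) ≤ −log 4; (ii) for the constant discriminator D ≡ 1/2, V(p_G, D) = −log 4 for every probability distribution p_G. Hence the max-min value sup_D inf_{p_G} V(p_G,D) equals −log 4 and is attained by the constant discriminator D(x) = 1/2. -/
open Finset

/-- **Max-min discriminator of the vanilla GAN:** (i) against any discriminator some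
generator distribution pushes the utility down to `−log 4`; (ii) the constant
discriminator `1/2` guarantees utility `−log 4` against every generator; hence the
max-min value `sup_D inf_{p_G} V` equals `−log 4`, attained at `D ≡ 1/2`. -/
theorem vanilla_gan_maxmin_discriminator
    {N : Type*} [Fintype N] [Nonempty N]
    (pdata : N → ℝ) (h1 : ∀ x, 0 ≤ pdata x) (h2 : ∑ x, pdata x = 1) :
    (∀ D : N → ℝ, (∀ x, D x ∈ Set.Ioo (0:ℝ) 1) →
      ∃ pG : N → ℝ, (∀ x, 0 ≤ pG x) ∧ ∑ x, pG x = 1 ∧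
        ∑ x, pdata x * Real.log (D x) + ∑ x, pG x * Real.log (1 - D x) ≤ -Real.log 4) ∧
    (∀ pG : N → ℝ, (∀ x, 0 ≤ pG x) → ∑ x, pG x = 1 →
      ∑ x, pdata x * Real.log ((1:ℝ)/2) + ∑ x, pG x * Real.log (1 - (1:ℝ)/2) =
        -Real.log 4) ∧
    sSup ((fun D : N → ℝ =>
        sInf ((fun pG : N → ℝ =>
            ∑ x, pdata x * Real.log (D x) + ∑ x, pG x * Real.log (1 - D x)) ''
          {pG | (∀ x, 0 ≤ pG x) ∧ ∑ x, pG x = 1})) ''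
      {D | ∀ x, D x ∈ Set.Ioo (0:ℝ) 1}) = -Real.log 4 := by
  have A : ∀ D : N → ℝ, (∀ x, D x ∈ Set.Ioo (0:ℝ) 1) →
      ∑ x, pdata x * Real.log (D x) + ∑ x, pdata x * Real.log (1 - D x) ≤ -Real.log 4 := by
    intro D hD
    rw [← Finset.sum_add_distrib]
    have key : ∀ x ∈ Finset.univ, pdata x * Real.log (D x) + pdata x * Real.log (1 - D x)
        ≤ pdata x * (-Real.log 4) := by
      intro x _
      obtain ⟨ha, hb⟩ := hD x
      have hb' : 0 < 1 - D x := by linarith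
      rw [← mul_add, ← Real.log_mul ha.ne' hb'.ne', ← Real.log_inv]
      apply mul_le_mul_of_nonneg_left _ (h1 x)
      apply Real.log_le_log (mul_pos ha hb')
      nlinarith [sq_nonneg (D x - 1/2)]
    have := Finset.sum_le_sum key
    rwa [← Finset.sum_mul, h2, one_mul] at this
  have B : ∀ pG : N → ℝ, (∀ x, 0 ≤ pG x) → ∑ x, pG x = 1 →
      ∑ x, pdata x * Real.log ((1:ℝ)/2) + ∑ x, pG x * Real.log (1 - (1:ℝ)/2) =
        -Real.log 4 := by
    intro pG _ hs
    rw [← Finset.sum_mul, ← Finset.sum_mul, h2, hs]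
    have e : (1:ℝ) - 1/2 = 1/2 := by norm_num
    rw [e, one_mul, ← Real.log_mul (by norm_num) (by norm_num), ← Real.log_inv]
    norm_num
  refine ⟨fun D hD => ⟨pdata, h1, h2, A D hD⟩, B, ?_⟩
  apply IsGreatest.csSup_eq
  constructor
  · refine ⟨fun _ => 1/2, fun x => by norm_num, ?_⟩
    apply IsLeast.csInf_eq
    constructor
    · exact ⟨pdata, ⟨h1, h2⟩, B pdata h1 h2⟩
    · rintro _ ⟨pG, ⟨hp, hs⟩, rfl⟩
      exact (B pG hp hs).ge
  · rintro _ ⟨D, hD, rfl⟩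
    refine le_trans (csInf_le ?_ ⟨pdata, ⟨h1, h2⟩, rfl⟩) (A D hD)
    refine ⟨∑ x, pdata x * Real.log (D x) + ∑ x, Real.log (1 - D x), ?_⟩
    rintro _ ⟨pG, ⟨hp, hs⟩, rfl⟩
    have h : ∑ x, Real.log (1 - D x) ≤ ∑ x, pG x * Real.log (1 - D x) := by
      apply Finset.sum_le_sum
      intro x _
      obtain ⟨ha, hb⟩ := hD x
      have hl : Real.log (1 - D x) ≤ 0 := Real.log_nonpos (by linarith) (by linarith)
      have hle : pG x ≤ 1 := by
        rw [← hs]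
        exact Finset.single_le_sum (fun i _ => hp i) (Finset.mem_univ x)
      nlinarith
    exact add_le_add le_rfl h
end

section
/- Let f : ℝ → ℝ be differentiable and strictly convex, let a, b > 0, and set v₀ = f'(a/b). For v ∈ ℝ let S_v = {u·v − f(u) : u ∈ ℝ}. Then: (i) S_{v₀} is bounded above and sSup S_{v₀} = (a/b)·v₀ − f(a/b), attained at u = a/b; (ii) a·v₀ − b·sSup S_{v₀} = b·f(a/b); and (iii) for every v ∈ ℝ such that S_v is bounded above, a·v − b·sSup S_v ≤ b·f(a/b) = a·v₀ − b·sSup S_{v₀}. In other words, v₀ = f'(a/b) maximizes v ↦ a·v − b·f*(v), where f*(v) = sSup S_v is the convex conjugate of f. -/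
/-- **Optimal f-GAN discriminator coordinate:** for a differentiable strictly convex
`f` and `a, b > 0`, the value `v₀ = f'(a/b)` maximizes `v ↦ a·v − b·f*(v)`, where
`f*(v) = sSup {u·v − f(u)}` is the convex conjugate of `f`; the supremum defining
`f*(v₀)` is attained at `u = a/b`, and the maximal value is `b·f(a/b)`. -/
theorem fgan_optimal_discriminator_coordinate
    (f : ℝ → ℝ) (hf : Differentiable ℝ f) (hconv : StrictConvexOn ℝ Set.univ f)
    (a b : ℝ) (ha : 0 < a) (hb : 0 < b) :
    IsGreatest {z | ∃ u : ℝ, z = u * deriv f (a / b) - f u}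
      (a / b * deriv f (a / b) - f (a / b)) ∧
    sSup {z | ∃ u : ℝ, z = u * deriv f (a / b) - f u} =
      a / b * deriv f (a / b) - f (a / b) ∧
    a * deriv f (a / b) - b * sSup {z | ∃ u : ℝ, z = u * deriv f (a / b) - f u} =
      b * f (a / b) ∧
    ∀ v : ℝ, BddAbove {z | ∃ u : ℝ, z = u * v - f u} →
      a * v - b * sSup {z | ∃ u : ℝ, z = u * v - f u} ≤ b * f (a / b) := by
  have key : IsGreatest {z | ∃ u : ℝ, z = u * deriv f (a / b) - f u}
      (a / b * deriv f (a / b) - f (a / b)) := by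
    refine ⟨⟨a / b, rfl⟩, ?_⟩
    rintro z ⟨u, rfl⟩
    rcases lt_trichotomy u (a / b) with h | h | h
    · have h1 := hconv.convexOn.slope_le_deriv (Set.mem_univ u) (Set.mem_univ (a / b)) h (hf _)
      rw [slope_def_field, div_le_iff₀ (sub_pos.2 h)] at h1
      linarith
    · rw [h]
    · have h1 := hconv.convexOn.deriv_le_slope (Set.mem_univ (a / b)) (Set.mem_univ u) h (hf _)
      rw [slope_def_field, le_div_iff₀ (sub_pos.2 h)] at h1
      linarith
  have hab : b * (a / b) = a := by field_simp
  refine ⟨key, key.csSup_eq, ?_, ?_⟩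
  · rw [key.csSup_eq, mul_sub, ← mul_assoc, hab]
    ring
  · intro v hv
    have h1 : a / b * v - f (a / b) ≤ sSup {z | ∃ u : ℝ, z = u * v - f u} :=
      le_csSup hv ⟨a / b, rfl⟩
    have h2 := mul_le_mul_of_nonneg_left h1 hb.le
    rw [mul_sub, ← mul_assoc, hab] at h2
    linarith
end

section
/- Let N be a nonempty finite set equipped with a metric dist, and let p_data : N → ℝ be a probability distribution on N. For D : N → ℝ and a probability distribution p_G on N define V(p_G, D) = Σ_{x∈N} (p_data(x) − p_G(x))·D(x), and let D_max = max_{x∈N} D(x). Then: (i) for every D : N → ℝ and every probability distribution p_G, V(p_G, D) ≥ Σ_{x∈N} p_data(x)·D(x) − D_max, with equality if and only if p_G is supported on {x : D(x) = D_max}; consequently inf over probability distributions p_G of V(p_G,D) equals Σ p_data(x)D(x) − D_max ≤ 0; (ii) for every constant function D and every probability distribution p_G, V(p_G,D) = 0. Hence the max-min value sup over 1-Lipschitz D : N → ℝ of inf over probability distributions p_G of V(p_G,D) equals 0, and it is attained by constant discriminators (which are 1-Lipschitz). -/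
open Finset

/-- **WGAN max-min analysis over a finite metric space:** with
`V(p_G, D) = ∑ (p_data − p_G)·D`, (i) for fixed `D` the generator's best response
pushes `V` down to `∑ p_data·D − D_max` (attained exactly by distributions supported on
the argmax of `D`), a quantity that is `≤ 0`; (ii) constant discriminators give `V = 0`
against every generator and are 1-Lipschitz; hence the max-min value over 1-Lipschitz
discriminators is `0`. -/
theorem wgan_maxmin
    {N : Type*} [Fintype N] [Nonempty N] [MetricSpace N]
    (pdata : N → ℝ) (h1 : ∀ x, 0 ≤ pdata x) (h2 : ∑ x, pdata x = 1) :
    (∀ D : N → ℝ, ∀ pG : N → ℝ, (∀ x, 0 ≤ pG x) → ∑ x, pG x = 1 →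
      (∑ x, pdata x * D x - Finset.univ.sup' Finset.univ_nonempty D ≤
        ∑ x, (pdata x - pG x) * D x) ∧
      (∑ x, (pdata x - pG x) * D x =
          ∑ x, pdata x * D x - Finset.univ.sup' Finset.univ_nonempty D ↔
        ∀ x, D x ≠ Finset.univ.sup' Finset.univ_nonempty D → pG x = 0)) ∧
    (∀ D : N → ℝ,
      sInf ((fun pG : N → ℝ => ∑ x, (pdata x - pG x) * D x) ''
          {pG | (∀ x, 0 ≤ pG x) ∧ ∑ x, pG x = 1}) =
        ∑ x, pdata x * D x - Finset.univ.sup' Finset.univ_nonempty D ∧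
      ∑ x, pdata x * D x - Finset.univ.sup' Finset.univ_nonempty D ≤ 0) ∧
    (∀ c : ℝ, ∀ pG : N → ℝ, (∀ x, 0 ≤ pG x) → ∑ x, pG x = 1 →
      ∑ x, (pdata x - pG x) * c = 0) ∧
    (∀ c : ℝ, LipschitzWith 1 (fun _ : N => c)) ∧
    sSup ((fun D : N → ℝ =>
        sInf ((fun pG : N → ℝ => ∑ x, (pdata x - pG x) * D x) ''
          {pG | (∀ x, 0 ≤ pG x) ∧ ∑ x, pG x = 1})) ''
      {D : N → ℝ | LipschitzWith 1 D}) = 0 := by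
  have key : ∀ D : N → ℝ, ∀ pG : N → ℝ, ∑ x, pG x = 1 →
      ∑ x, (pdata x - pG x) * D x =
        (∑ x, pdata x * D x - Finset.univ.sup' Finset.univ_nonempty D) +
          ∑ x, pG x * (Finset.univ.sup' Finset.univ_nonempty D - D x) := by
    intro D pG hs
    simp only [sub_mul, mul_sub, Finset.sum_sub_distrib, ← Finset.sum_mul, hs]
    ring
  have hle : ∀ (D : N → ℝ) x, D x ≤ Finset.univ.sup' Finset.univ_nonempty D :=
    fun D x => Finset.le_sup' D (Finset.mem_univ x)
  have hnn : ∀ (D pG : N → ℝ), (∀ x, 0 ≤ pG x) → ∀ x ∈ (Finset.univ : Finset N),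
      0 ≤ pG x * (Finset.univ.sup' Finset.univ_nonempty D - D x) :=
    fun D pG h0 x _ => mul_nonneg (h0 x) (sub_nonneg.2 (hle D x))
  have A : ∀ D : N → ℝ, ∀ pG : N → ℝ, (∀ x, 0 ≤ pG x) → ∑ x, pG x = 1 →
      (∑ x, pdata x * D x - Finset.univ.sup' Finset.univ_nonempty D ≤
        ∑ x, (pdata x - pG x) * D x) ∧
      (∑ x, (pdata x - pG x) * D x =
          ∑ x, pdata x * D x - Finset.univ.sup' Finset.univ_nonempty D ↔
        ∀ x, D x ≠ Finset.univ.sup' Finset.univ_nonempty D → pG x = 0) := by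
    intro D pG h0 hs
    rw [key D pG hs]
    refine ⟨le_add_of_nonneg_right (Finset.sum_nonneg (hnn D pG h0)), ?_⟩
    rw [add_eq_left, Finset.sum_eq_zero_iff_of_nonneg (hnn D pG h0)]
    refine forall_congr' fun x => ?_
    simp only [Finset.mem_univ, true_imp_iff, mul_eq_zero, sub_eq_zero]
    constructor
    · rintro (h | h) hne
      · exact h
      · exact absurd h.symm hne
    · intro h
      by_cases hx : D x = Finset.univ.sup' Finset.univ_nonempty D
      · exact Or.inr hx.symm
      · exact Or.inl (h hx)
  have B : ∀ D : N → ℝ,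
      sInf ((fun pG : N → ℝ => ∑ x, (pdata x - pG x) * D x) ''
          {pG | (∀ x, 0 ≤ pG x) ∧ ∑ x, pG x = 1}) =
        ∑ x, pdata x * D x - Finset.univ.sup' Finset.univ_nonempty D ∧
      ∑ x, pdata x * D x - Finset.univ.sup' Finset.univ_nonempty D ≤ 0 := by
    intro D
    constructor
    · apply IsLeast.csInf_eq
      constructor
      · classical
        obtain ⟨x0, -, hx0⟩ := Finset.exists_mem_eq_sup' Finset.univ_nonempty D
        have p0 : ∀ x, 0 ≤ (Pi.single x0 1 : N → ℝ) x := by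
          intro x
          by_cases h : x = x0
          · subst h; simp
          · simp [h]
        have p1 : ∑ x, (Pi.single x0 1 : N → ℝ) x = 1 := by simp
        refine ⟨Pi.single x0 1, ⟨p0, p1⟩, ?_⟩
        refine (A D _ p0 p1).2.2 fun x hx => ?_
        have : x ≠ x0 := by
          rintro rfl
          exact hx hx0.symm
        simp [this]
      · rintro _ ⟨pG, ⟨h0, hs⟩, rfl⟩
        exact (A D pG h0 hs).1
    · have := (A D pdata h1 h2).1
      simpa using this
  have C : ∀ c : ℝ, ∀ pG : N → ℝ, (∀ x, 0 ≤ pG x) → ∑ x, pG x = 1 →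
      ∑ x, (pdata x - pG x) * c = 0 := by
    intro c pG _ hs
    rw [← Finset.sum_mul, Finset.sum_sub_distrib, h2, hs]
    simp
  have L : ∀ c : ℝ, LipschitzWith 1 (fun _ : N => c) :=
    fun c => (LipschitzWith.const c).weaken zero_le_one
  refine ⟨A, B, C, L, ?_⟩
  apply IsGreatest.csSup_eq
  constructor
  · refine ⟨fun _ => 0, L 0, ?_⟩
    refine (B fun _ => 0).1.trans ?_
    simp
  · rintro _ ⟨D, -, rfl⟩
    exact (B D).1.trans_le (B D).2
end

section
/- Let N be a nonempty finite set, let p_data : N → ℝ be a probability distribution with p_data(x) > 0 for all x, and let 𝒢 be a nonempty compact convex set of probability distributions on N each of which is fully supported (p_G(x) > 0 for all x), with p_data ∉ 𝒢. Define V(p_G, D) = Σ_{x∈N} p_data(x)·log(D(x)) + Σ_{x∈N} p_G(x)·log(1 − D(x)) for D : N → (0,1). Then there exists G* ∈ 𝒢 minimizing the Jensen–Shannon divergence JSD(p_data‖·) over 𝒢, and for any such G*, setting D*(x) = p_data(x)/(p_data(x) + p_{G*}(x)) ∈ (0,1), the pair (G*, D*) is an equilibrium of the restricted game: V(G*, D)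 ≤ V(G*, D*) for every D : N → (0,1), and V(p_G, D*) ≥ V(G*, D*) for every p_G ∈ 𝒢. -/
open Finset

lemma gan_pointwise {p g d : ℝ} (hp : 0 < p) (hg : 0 < g) (hd : d ∈ Set.Ioo (0:ℝ) 1) :
    p * Real.log d + g * Real.log (1 - d) ≤
      p * Real.log (p / (p + g)) + g * Real.log (1 - p / (p + g)) := by
  obtain ⟨h0, h1⟩ := hd
  have hs : 0 < p + g := by positivity
  have h1' : 0 < 1 - d := by linarith
  have e : 1 - p / (p + g) = g / (p + g) := by field_simp; ring
  rw [e]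
  have key : ∀ a b : ℝ, 0 < a → 0 < b →
      a * Real.log b - a * Real.log (a / (p + g)) ≤ b * (p + g) - a := by
    intro a b ha hb
    rw [← mul_sub, ← Real.log_div hb.ne' (by positivity)]
    have := Real.log_le_sub_one_of_pos (x := b / (a / (p + g))) (by positivity)
    calc _ ≤ a * (b / (a / (p + g)) - 1) := by gcongr
      _ = _ := by field_simp
  have k1 := key p d hp h0
  have k2 := key g (1 - d) hg h1'
  linarith

lemma gan_value_eq_JSD {N : Type*} [Fintype N] (p q : N → ℝ) (hp : ∀ x, 0 < p x)
    (hq : ∀ x, 0 < q x) (hps : ∑ x, p x = 1) (hqs : ∑ x, q x = 1) :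
    ∑ x, p x * Real.log (p x / (p x + q x)) + ∑ x, q x * Real.log (1 - p x / (p x + q x)) =
      2 * JSD p q - 2 * Real.log 2 := by
  have e1 : ∀ x, p x * Real.log (2 * p x / (p x + q x)) =
      p x * Real.log 2 + p x * Real.log (p x / (p x + q x)) := by
    intro x
    have := hp x
    have := hq x
    rw [mul_div_assoc, Real.log_mul (by norm_num) (by positivity)]; ring
  have e2 : ∀ x, q x * Real.log (2 * q x / (p x + q x)) =
      q x * Real.log 2 + q x * Real.log (1 - p x / (p x + q x)) := by
    intro x
    have := hp x
    have := hq x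
    have e : 1 - p x / (p x + q x) = q x / (p x + q x) := by field_simp; ring
    rw [e, mul_div_assoc, Real.log_mul (by norm_num) (by positivity)]; ring
  unfold JSD
  simp only [e1, e2, Finset.sum_add_distrib, ← Finset.sum_mul, hps, hqs]
  ring

/-- **Non-realizable vanilla GAN equilibrium:** over a compact convex family `𝒢` of
fully supported generator distributions not containing `p_data`, a minimizer `G*` of
`JSD(p_data‖·)` exists, and for any such minimizer the pair `(G*, D*)` with
`D*(x) = p_data(x)/(p_data(x) + p_{G*}(x))` is an equilibrium of the restricted game. -/
theorem vanilla_gan_nonrealizable_equilibrium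
    {N : Type*} [Fintype N] [Nonempty N]
    (pdata : N → ℝ) (hpdata : ∀ x, 0 < pdata x) (hsum : ∑ x, pdata x = 1)
    (𝒢 : Set (N → ℝ)) (hne : 𝒢.Nonempty) (hcomp : IsCompact 𝒢) (hconv : Convex ℝ 𝒢)
    (hprob : ∀ pG ∈ 𝒢, (∀ x, 0 < pG x) ∧ ∑ x, pG x = 1)
    (hnotin : pdata ∉ 𝒢) :
    (∃ Gstar ∈ 𝒢, ∀ G ∈ 𝒢, JSD pdata Gstar ≤ JSD pdata G) ∧
    ∀ Gstar ∈ 𝒢, (∀ G ∈ 𝒢, JSD pdata Gstar ≤ JSD pdata G) →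
      (∀ x, pdata x / (pdata x + Gstar x) ∈ Set.Ioo (0:ℝ) 1) ∧
      (∀ D : N → ℝ, (∀ x, D x ∈ Set.Ioo (0:ℝ) 1) →
        ∑ x, pdata x * Real.log (D x) + ∑ x, Gstar x * Real.log (1 - D x) ≤
          ∑ x, pdata x * Real.log (pdata x / (pdata x + Gstar x)) +
            ∑ x, Gstar x * Real.log (1 - pdata x / (pdata x + Gstar x))) ∧
      (∀ pG ∈ 𝒢,
        ∑ x, pdata x * Real.log (pdata x / (pdata x + Gstar x)) +
            ∑ x, Gstar x * Real.log (1 - pdata x / (pdata x + Gstar x)) ≤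
          ∑ x, pdata x * Real.log (pdata x / (pdata x + Gstar x)) +
            ∑ x, pG x * Real.log (1 - pdata x / (pdata x + Gstar x))) := by
  have mem : ∀ G ∈ 𝒢, ∀ x, pdata x / (pdata x + G x) ∈ Set.Ioo (0:ℝ) 1 := by
    intro G hG x
    have h1 := hpdata x
    have h2 := (hprob G hG).1 x
    refine ⟨by positivity, ?_⟩
    rw [div_lt_one (by positivity)]
    linarith
  have best : ∀ G ∈ 𝒢, ∀ D : N → ℝ, (∀ x, D x ∈ Set.Ioo (0:ℝ) 1) →
        ∑ x, pdata x * Real.log (D x) + ∑ x, G x * Real.log (1 - D x) ≤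
          ∑ x, pdata x * Real.log (pdata x / (pdata x + G x)) +
            ∑ x, G x * Real.log (1 - pdata x / (pdata x + G x)) := by
    intro G hG D hD
    rw [← Finset.sum_add_distrib, ← Finset.sum_add_distrib]
    exact Finset.sum_le_sum fun x _ => gan_pointwise (hpdata x) ((hprob G hG).1 x) (hD x)
  refine ⟨?_, ?_⟩
  · have hc : ContinuousOn (fun G => JSD pdata G) 𝒢 := by
      unfold JSD
      have hpos : ∀ x, ∀ G ∈ 𝒢, pdata x + G x ≠ 0 := fun x G hG =>
        (add_pos (hpdata x) ((hprob G hG).1 x)).ne'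
      have hci : ∀ x, ContinuousOn (fun G : N → ℝ => G x) 𝒢 :=
        fun x => (continuous_apply x).continuousOn
      refine ContinuousOn.add (continuousOn_const.mul (continuousOn_finsetSum _ fun x _ => ?_))
        (continuousOn_const.mul (continuousOn_finsetSum _ fun x _ => ?_))
      · refine continuousOn_const.mul (ContinuousOn.log
          (continuousOn_const.div (continuousOn_const.add (hci x)) (hpos x)) ?_)
        intro G hG
        exact div_ne_zero (mul_ne_zero two_ne_zero (hpdata x).ne') (hpos x G hG)
      · refine (hci x).mul (ContinuousOn.log
          ((continuousOn_const.mul (hci x)).div (continuousOn_const.add (hci x)) (hpos x)) ?_)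
        intro G hG
        exact div_ne_zero (mul_ne_zero two_ne_zero ((hprob G hG).1 x).ne') (hpos x G hG)
    obtain ⟨G, hG, hmin⟩ := hcomp.exists_isMinOn hne hc
    exact ⟨G, hG, fun G' hG' => hmin hG'⟩
  · intro Gs hGs hmin
    refine ⟨mem Gs hGs, best Gs hGs, ?_⟩
    intro G hG
    -- the segment from the minimizer to `G`
    let q : ℝ → N → ℝ := fun t x => Gs x + t * (G x - Gs x)
    let F : ℝ → ℝ := fun t => ∑ x, (G x - Gs x) * Real.log (1 - pdata x / (pdata x + q t x))
    have hF : ∀ t ∈ Set.Ioo (0:ℝ) 1, 0 ≤ F t := by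
      intro t ht
      have hq : q t ∈ 𝒢 := by
        have := hconv hGs hG (a := 1 - t) (b := t) (by linarith [ht.2]) ht.1.le (by ring)
        convert this using 1
        funext x
        simp only [q, Pi.add_apply, Pi.smul_apply, smul_eq_mul]
        ring
      have h1 := best Gs hGs _ (mem _ hq)
      have h2 := gan_value_eq_JSD pdata (q t) hpdata (hprob _ hq).1 hsum (hprob _ hq).2
      have h3 := gan_value_eq_JSD pdata Gs hpdata (hprob _ hGs).1 hsum (hprob _ hGs).2
      have h4 := hmin _ hq
      have h5 : ∑ x, q t x * Real.log (1 - pdata x / (pdata x + q t x)) =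
          ∑ x, Gs x * Real.log (1 - pdata x / (pdata x + q t x)) + t * F t := by
        simp only [F, Finset.mul_sum, ← Finset.sum_add_distrib]
        refine Finset.sum_congr rfl fun x _ => ?_
        simp only [q]
        ring
      have h6 : 0 ≤ t * F t := by linarith
      exact nonneg_of_mul_nonneg_right h6 ht.1
    have hcont : ContinuousAt F 0 := by
      simp only [F]
      refine tendsto_finsetSum _ fun x _ => ?_
      have hqc : ContinuousAt (fun t => q t x) 0 := by
        simp only [q]; fun_prop
      have h0 : q 0 x = Gs x := by simp [q]
      have hm := mem Gs hGs x
      refine ContinuousAt.mul continuousAt_const (ContinuousAt.log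
        (continuousAt_const.sub (continuousAt_const.div (continuousAt_const.add hqc) ?_)) ?_)
      · rw [h0]
        exact (add_pos (hpdata x) ((hprob Gs hGs).1 x)).ne'
      · rw [h0]
        exact (sub_pos.2 hm.2).ne'
    have hlim : 0 ≤ F 0 := by
      refine ge_of_tendsto (hcont.tendsto.mono_left (nhdsWithin_le_nhds (s := Set.Ioi 0))) ?_
      filter_upwards [Ioo_mem_nhdsGT (zero_lt_one' ℝ)] with t ht using hF t ht
    have hq0 : q 0 = Gs := by funext x; simp [q]
    simp only [F, hq0, sub_mul, Finset.sum_sub_distrib] at hlim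
    linarith
end
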